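/- The hypergeometric value ₆F₅(1/2,1/2,1/2,1/2,1/2,1/2; 1,1,1,1,1; 1) = ∑_{k=0}^∞ ((1/2)_k / k!)⁶ equals 16 times the integral of τ² · ( η(τ)¹² + 32 η(τ)⁴ η(4τ)⁸ ) dτ along the straight segment in the upper half-plane from τ = (1+i)/2 to τ = (−1+i)/2; that is, ∑_{k=0}^∞ ((1/2)_k / k!)⁶ = −16 ∫_{−1/2}^{1/2} (t + i/2)² · ( η(t+i/2)¹² + 32 η(t+i/2)⁴ η(4t+2i)⁸ ) dt. (Here η(τ)¹² + 32 η(τ)⁴ η(4τ)⁸ is the eta-product expression for the weight-6 newform f_{8.6.a.a} evaluated at τ/2.) -/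

import Mathlib

open Complex Real

/-- The Pochhammer symbol `(a)ₖ = a(a+1)⋯(a+k−1)`. -/
noncomputable def poch (a : ℂ) (k : ℕ) : ℂ := ∏ i ∈ Finset.range k, (a + i)

/-- The generalized hypergeometric series
`ₙFₙ₋₁(a₁,…,aₙ; b₂,…,bₙ; z) = ∑ₖ (a₁)ₖ⋯(aₙ)ₖ / ((1)ₖ(b₂)ₖ⋯(bₙ)ₖ) · zᵏ`. -/
noncomputable def hypF (upper lower : List ℂ) (z : ℂ) : ℂ :=
  ∑' k : ℕ, (upper.map fun a => poch a k).prod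
    / (poch 1 k * (lower.map fun b => poch b k).prod) * z ^ k

/-- The Dedekind eta function `η(τ) = e^{πiτ/12} ∏ₙ (1 − e^{2πinτ})` on the upper
half-plane (as a function on all of `ℂ`). -/
noncomputable def dedekindEta (τ : ℂ) : ℂ :=
  Complex.exp (Real.pi * Complex.I * τ / 12)
    * ∏' n : ℕ, (1 - Complex.exp (2 * Real.pi * Complex.I * ((n : ℂ) + 1) * τ))



noncomputable def gP (q : ℂ) : ℂ := ∏' n : ℕ, (1 - q ^ (n + 1))
noncomputable def oddM (q : ℂ) : ℂ := ∏' n : ℕ, (1 - q ^ (2 * n + 1))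
noncomputable def oddP (q : ℂ) : ℂ := ∏' n : ℕ, (1 + q ^ (2 * n + 1))
noncomputable def evP (q : ℂ) : ℂ := ∏' n : ℕ, (1 + q ^ (n + 1))
noncomputable def pP (q : ℂ) : ℂ := gP q ^ 2 / gP (q ^ 2)

lemma summ_geo {q : ℂ} (hq : ‖q‖ < 1) (c : ℂ) (a b : ℕ) (ha : 1 ≤ a) :
    Summable fun k : ℕ => ‖c * q ^ (a * k + b)‖ := by
  have h1 : ‖q‖ ^ a < 1 := pow_lt_one₀ (norm_nonneg _) hq (by omega)
  have := (summable_geometric_of_lt_one (by positivity) h1).mul_left (‖c‖ * ‖q‖ ^ b)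
  refine this.congr fun k => ?_
  rw [norm_mul, norm_pow, pow_add, pow_mul]; ring

lemma mult1 {q : ℂ} (hq : ‖q‖ < 1) (c : ℂ) (a b : ℕ) (ha : 1 ≤ a) :
    Multipliable fun k : ℕ => 1 + c * q ^ (a * k + b) :=
  multipliable_one_add_of_summable (summ_geo hq c a b ha)

lemma mult_g {q : ℂ} (hq : ‖q‖ < 1) : Multipliable fun k : ℕ => 1 - q ^ (k + 1) :=
  (mult1 hq (-1) 1 1 le_rfl).congr fun k => by simp [sub_eq_add_neg]
lemma mult_oM {q : ℂ} (hq : ‖q‖ < 1) : Multipliable fun k : ℕ => 1 - q ^ (2 * k + 1) :=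
  (mult1 hq (-1) 2 1 (by norm_num)).congr fun k => by simp [sub_eq_add_neg]
lemma mult_oP {q : ℂ} (hq : ‖q‖ < 1) : Multipliable fun k : ℕ => 1 + q ^ (2 * k + 1) :=
  (mult1 hq 1 2 1 (by norm_num)).congr fun k => by simp
lemma mult_e {q : ℂ} (hq : ‖q‖ < 1) : Multipliable fun k : ℕ => 1 + q ^ (k + 1) :=
  (mult1 hq 1 1 1 le_rfl).congr fun k => by simp

lemma nlt {q : ℂ} (hq : ‖q‖ < 1) (n : ℕ) (hn : n ≠ 0) : ‖q ^ n‖ < 1 := by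
  rw [norm_pow]; exact pow_lt_one₀ (norm_nonneg _) hq hn

lemma one_sub_ne {q : ℂ} (hq : ‖q‖ < 1) : 1 - q ≠ 0 := by
  intro h
  have : q = 1 := (sub_eq_zero.mp h).symm
  rw [this] at hq; simp at hq

lemma gP_ne {q : ℂ} (hq : ‖q‖ < 1) : gP q ≠ 0 := by
  have := tprod_one_add_ne_zero_of_summable (f := fun k : ℕ => (-1) * q ^ (1 * k + 1))
    (fun i => by
      have := one_sub_ne (nlt hq (1 * i + 1) (by omega))
      simpa [sub_eq_add_neg] using this) (summ_geo hq (-1) 1 1 le_rfl)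
  unfold gP
  convert this using 3 with n
  simp [sub_eq_add_neg]

lemma gP_zero : gP 0 = 1 := by simp [gP]
lemma pP_zero : pP 0 = 1 := by simp [pP, gP_zero]

lemma gP_split {q : ℂ} (hq : ‖q‖ < 1) : gP q = oddM q * gP (q ^ 2) := by
  unfold gP oddM
  have h := tprod_even_mul_odd (f := fun k : ℕ => 1 - q ^ (k + 1)) ?_ ?_
  · rw [← h]
    congr 1
    refine tprod_congr fun k => ?_
    rw [← pow_mul]; ring_nf
  · exact mult_oM hq
  · refine (mult_g (nlt hq 2 (by norm_num))).congr fun k => ?_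
    rw [← pow_mul]; ring_nf

lemma oddPM {q : ℂ} (hq : ‖q‖ < 1) : oddP q * oddM q = oddM (q ^ 2) := by
  unfold oddP oddM
  rw [← (mult_oP hq).tprod_mul (mult_oM hq)]
  refine tprod_congr fun k => ?_
  rw [← pow_mul]; ring

lemma oddM_neg (q : ℂ) : oddM (-q) = oddP q := by
  unfold oddP oddM
  refine tprod_congr fun k => ?_
  rw [Odd.neg_pow ⟨k, rfl⟩]; ring

lemma evg {q : ℂ} (hq : ‖q‖ < 1) : evP q * gP q = gP (q ^ 2) := by
  unfold evP gP
  rw [← (mult_e hq).tprod_mul (mult_g hq)]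
  refine tprod_congr fun k => ?_
  rw [← pow_mul]; ring

lemma pP_eq {q : ℂ} (hq : ‖q‖ < 1) : pP q = oddM q ^ 2 * gP (q ^ 2) := by
  have := gP_ne (nlt hq 2 (by norm_num))
  rw [pP, gP_split hq]; field_simp

lemma pP_ne {q : ℂ} (hq : ‖q‖ < 1) : pP q ≠ 0 :=
  div_ne_zero (pow_ne_zero _ (gP_ne hq)) (gP_ne (nlt hq 2 (by norm_num)))

lemma pP_mul {q : ℂ} (hq : ‖q‖ < 1) : pP q * pP (-q) = pP (q ^ 2) ^ 2 := by
  have h2 := nlt hq 2 (by norm_num)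
  have h4 := gP_ne (nlt h2 2 (by norm_num))
  have h22 := gP_ne h2
  rw [pP_eq hq, pP_eq (q := -q) (by simpa using hq), oddM_neg, neg_sq, pP_eq h2]
  have := oddPM hq
  have h3 := gP_split h2
  calc _ = (oddP q * oddM q) ^ 2 * gP (q ^ 2) ^ 2 := by ring
    _ = _ := by rw [this]; nth_rw 1 [h3]; ring

lemma pP_neg_eq {q : ℂ} (hq : ‖q‖ < 1) :
    pP (-q) = gP (q ^ 2) ^ 5 / (gP q ^ 2 * gP (q ^ 4) ^ 2) := by
  have h2 := nlt hq 2 (by norm_num)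
  have h22 := gP_ne h2
  have h1 := gP_ne hq
  have h4 := gP_ne (nlt hq 4 (by norm_num))
  have := pP_mul hq
  rw [show pP q = gP q ^ 2 / gP (q ^ 2) from rfl,
    show pP (q ^ 2) = gP (q ^ 2) ^ 2 / gP ((q ^ 2) ^ 2) from rfl, ← pow_mul] at this
  norm_num at this
  field_simp at this ⊢
  linear_combination this

lemma gP_diff {q : ℂ} (hq : ‖q‖ < 1) : DifferentiableAt ℂ gP q :=
  ModularForm.differentiableOn_tprod_one_sub_pow.differentiableAt
    (Metric.isOpen_ball.mem_nhds (by simpa using hq))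

lemma gP_ana {q : ℂ} (hq : ‖q‖ < 1) : AnalyticAt ℂ gP q :=
  ModularForm.differentiableOn_tprod_one_sub_pow.analyticAt
    (Metric.isOpen_ball.mem_nhds (by simpa using hq))


noncomputable def hN (q : ℂ) (m : ℕ) : ℂ := ∏ k ∈ Finset.range m, (1 - (q ^ 2) ^ (k + 1))
noncomputable def rZ (q : ℂ) (m : ℤ) : ℂ := if m < 0 then 0 else (hN q m.toNat)⁻¹

lemma hN_ne {q : ℂ} (hq : ‖q‖ < 1) (m : ℕ) : hN q m ≠ 0 :=
  Finset.prod_ne_zero_iff.mpr fun k _ => one_sub_ne (nlt (nlt hq 2 (by norm_num)) _ (by omega))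

lemma rZ_rec {q : ℂ} (hq : ‖q‖ < 1) (m : ℤ) :
    rZ q (m - 1) = (1 - q ^ (2 * m)) * rZ q m := by
  unfold rZ
  rcases lt_trichotomy m 0 with h | h | h
  · rw [if_pos (by omega), if_pos h]; simp
  · subst h; simp
  · obtain ⟨k, rfl⟩ : ∃ k : ℕ, m = k + 1 := ⟨(m - 1).toNat, by omega⟩
    rw [if_neg (by omega), if_neg (by omega)]
    have e1 : ((k : ℤ) + 1 - 1).toNat = k := by omega
    have e2 : ((k : ℤ) + 1).toNat = k + 1 := by omega
    rw [e1, e2, hN, hN, Finset.prod_range_succ]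
    have e3 : q ^ (2 * ((k : ℤ) + 1)) = (q ^ 2) ^ (k + 1) := by
      rw [← pow_mul]; norm_cast
    rw [e3]
    have := hN_ne hq k
    rw [hN] at this
    have h2 := one_sub_ne (nlt (nlt hq 2 (by norm_num)) (k + 1) (by omega))
    field_simp

noncomputable def cJ (q x : ℂ) (n : ℕ) (j : ℤ) : ℂ :=
  q ^ (j ^ 2) * x ^ j * (hN q (2 * n) * rZ q (n + j) * rZ q (n - j))

noncomputable def GJ (q x : ℂ) (n : ℕ) : ℂ :=
  ∏ k ∈ Finset.range n, ((1 + x * q ^ (2 * k + 1)) * (1 + x⁻¹ * q ^ (2 * k + 1)))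

lemma cJ_rec {q x : ℂ} (hq : ‖q‖ < 1) (hq0 : q ≠ 0) (hx : x ≠ 0) (n : ℕ) (j : ℤ) :
    cJ q x (n + 1) j = (1 + (q ^ (2 * n + 1)) ^ 2) * cJ q x n j
      + q ^ (2 * n + 1) * (x * cJ q x n (j - 1)) + q ^ (2 * n + 1) * (x⁻¹ * cJ q x n (j + 1)) := by
  have r1 := rZ_rec hq (n + 1 + j)
  have r2 := rZ_rec hq (n + 1 - j)
  have r3 := rZ_rec hq (n + j)
  have r4 := rZ_rec hq (n - j)
  have a1 : (n : ℤ) + 1 + j - 1 = n + j := by ring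
  have a2 : (n : ℤ) + 1 - j - 1 = n - j := by ring
  rw [a1] at r1
  rw [a2] at r2
  unfold cJ
  have e0 : hN q (2 * (n + 1)) = hN q (2 * n) * (1 - (q ^ 2) ^ (2 * n + 1)) * (1 - (q ^ 2) ^ (2 * n + 2)) := by
    rw [show 2 * (n + 1) = 2 * n + 1 + 1 by ring, hN, hN, Finset.prod_range_succ,
      Finset.prod_range_succ]
  rw [e0]
  push_cast
  have b1 : (n : ℤ) + (j - 1) = n + j - 1 := by ring
  have b2 : (n : ℤ) - (j - 1) = n + 1 - j := by ring
  have b3 : (n : ℤ) + (j + 1) = n + 1 + j := by ring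
  have b4 : (n : ℤ) - (j + 1) = n - j - 1 := by ring
  rw [b1, b2, b3, b4, r3, r4, r1, r2]
  generalize rZ q (n + 1 + j) = u
  generalize rZ q (n + 1 - j) = v
  generalize hN q (2 * n) = H
  have c1 : q ^ ((j - 1) ^ 2) = q ^ (j ^ 2) * (q ^ (2 * j))⁻¹ * q := by
    rw [← zpow_neg, ← zpow_add₀ hq0, ← zpow_add_one₀ hq0]; ring_nf
  have c2 : q ^ ((j + 1) ^ 2) = q ^ (j ^ 2) * (q ^ (2 * j)) * q := by
    rw [← zpow_add₀ hq0, ← zpow_add_one₀ hq0]; ring_nf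
  have c3 : x ^ (j - 1) = x ^ j * x⁻¹ := zpow_sub_one₀ hx j
  have c4 : x ^ (j + 1) = x ^ j * x := zpow_add_one₀ hx j
  have d1 : q ^ (2 * ((n : ℤ) + 1 + j)) = (q ^ n) ^ 2 * q ^ 2 * q ^ (2 * j) := by
    rw [show 2 * ((n : ℤ) + 1 + j) = ((n * 2 + 2 : ℕ) : ℤ) + 2 * j by push_cast; ring,
      zpow_add₀ hq0, zpow_natCast, pow_add, pow_mul]
  have d2 : q ^ (2 * ((n : ℤ) + 1 - j)) = (q ^ n) ^ 2 * q ^ 2 * (q ^ (2 * j))⁻¹ := by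
    rw [show 2 * ((n : ℤ) + 1 - j) = ((n * 2 + 2 : ℕ) : ℤ) + -(2 * j) by push_cast; ring,
      zpow_add₀ hq0, zpow_natCast, pow_add, pow_mul, zpow_neg]
  have d3 : q ^ (2 * ((n : ℤ) + j)) = (q ^ n) ^ 2 * q ^ (2 * j) := by
    rw [show 2 * ((n : ℤ) + j) = ((n * 2 : ℕ) : ℤ) + 2 * j by push_cast; ring,
      zpow_add₀ hq0, zpow_natCast, pow_mul]
  have d4 : q ^ (2 * ((n : ℤ) - j)) = (q ^ n) ^ 2 * (q ^ (2 * j))⁻¹ := by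
    rw [show 2 * ((n : ℤ) - j) = ((n * 2 : ℕ) : ℤ) + -(2 * j) by push_cast; ring,
      zpow_add₀ hq0, zpow_natCast, pow_mul, zpow_neg]
  rw [c1, c2, c3, c4, d1, d2, d3, d4]
  have f1 : (q ^ 2) ^ (2 * n + 1) = (q ^ n) ^ 4 * q ^ 2 := by ring
  have f2 : (q ^ 2) ^ (2 * n + 2) = (q ^ n) ^ 4 * q ^ 4 := by ring
  have f3 : q ^ (2 * n + 1) = (q ^ n) ^ 2 * q := by ring
  rw [f1, f2, f3]
  have hy : q ^ (2 * j) ≠ 0 := zpow_ne_zero _ hq0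
  generalize q ^ (2 * j) = y at *
  generalize q ^ n = Q
  generalize q ^ (j ^ 2) = K
  generalize x ^ j = X
  field_simp
  ring

lemma finJTP {q x : ℂ} (hq : ‖q‖ < 1) (hq0 : q ≠ 0) (hx : x ≠ 0) (n : ℕ) :
    HasSum (cJ q x n) (GJ q x n) := by
  induction n with
  | zero =>
    have := hasSum_single (f := cJ q x 0) 0 (fun j hj => by
      unfold cJ rZ
      rcases lt_or_gt_of_ne hj with h | h
      · simp [h]
      · simp [h])
    simpa [GJ, cJ, rZ, hN] using this
  | succ n ih =>
    have h1 : HasSum (fun j => cJ q x n (j - 1)) (GJ q x n) :=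
      (Equiv.subRight (1 : ℤ)).hasSum_iff (f := cJ q x n) |>.mpr ih
    have h2 : HasSum (fun j => cJ q x n (j + 1)) (GJ q x n) :=
      (Equiv.addRight (1 : ℤ)).hasSum_iff (f := cJ q x n) |>.mpr ih
    have h3 := ((ih.mul_left (1 + (q ^ (2 * n + 1)) ^ 2)).add
      ((h1.mul_left x).mul_left (q ^ (2 * n + 1)))).add
      ((h2.mul_left x⁻¹).mul_left (q ^ (2 * n + 1)))
    have e1 : GJ q x (n + 1) = (1 + (q ^ (2 * n + 1)) ^ 2) * GJ q x n
      + q ^ (2 * n + 1) * (x * GJ q x n) + q ^ (2 * n + 1) * (x⁻¹ * GJ q x n) := by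
      rw [GJ, Finset.prod_range_succ, ← GJ]
      generalize GJ q x n = G
      generalize q ^ (2 * n + 1) = Q
      field_simp; ring
    rw [e1, show cJ q x (n + 1) = _ from funext (cJ_rec hq hq0 hx n)]
    exact h3

lemma hN_tendsto {q : ℂ} (hq : ‖q‖ < 1) :
    Filter.Tendsto (hN q) Filter.atTop (nhds (gP (q ^ 2))) :=
  (mult_g (nlt hq 2 (by norm_num))).hasProd.tendsto_prod_nat

lemma rZ_tendsto {q : ℂ} (hq : ‖q‖ < 1) :
    Filter.Tendsto (rZ q) Filter.atTop (nhds (gP (q ^ 2))⁻¹) := by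
  have h := (hN_tendsto hq).inv₀ (gP_ne (nlt hq 2 (by norm_num)))
  have h2 : Filter.Tendsto (fun m : ℤ => m.toNat) Filter.atTop Filter.atTop :=
    Filter.tendsto_atTop.mpr fun b => by
      filter_upwards [Filter.eventually_ge_atTop (b : ℤ)] with m hm
      omega
  refine (h.comp h2).congr' ?_
  filter_upwards [Filter.eventually_ge_atTop (0 : ℤ)] with m hm
  simp [rZ, not_lt.mpr hm]

lemma bdd_hN {q : ℂ} (hq : ‖q‖ < 1) : ∃ C, ∀ m, ‖hN q m‖ ≤ C := by
  obtain ⟨C, hC⟩ := (Metric.isBounded_range_of_tendsto _ (hN_tendsto hq)).exists_norm_le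
  exact ⟨C, fun m => hC _ ⟨m, rfl⟩⟩

lemma bdd_rZ {q : ℂ} (hq : ‖q‖ < 1) : ∃ C, 0 ≤ C ∧ ∀ m, ‖rZ q m‖ ≤ C := by
  have h := (hN_tendsto hq).inv₀ (gP_ne (nlt hq 2 (by norm_num)))
  obtain ⟨C, hC⟩ := (Metric.isBounded_range_of_tendsto _ h).exists_norm_le
  have h0 : 0 ≤ C := (norm_nonneg _).trans (hC _ ⟨0, rfl⟩)
  refine ⟨C, h0, fun m => ?_⟩
  unfold rZ
  split_ifs
  · simpa using h0
  · exact hC _ ⟨m.toNat, rfl⟩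

lemma JTP_aux {q x : ℂ} (hq : ‖q‖ < 1) (hq0 : q ≠ 0) (hx : x ≠ 0)
    (hs : Summable fun j : ℤ => ‖q ^ (j ^ 2) * x ^ j‖) :
    (∑' j : ℤ, q ^ (j ^ 2) * x ^ j) = gP (q ^ 2) *
      ((∏' k : ℕ, (1 + x * q ^ (2 * k + 1))) * (∏' k : ℕ, (1 + x⁻¹ * q ^ (2 * k + 1)))) := by
  have hg := gP_ne (nlt hq 2 (by norm_num))
  obtain ⟨C, hC⟩ := bdd_hN hq
  obtain ⟨D, hD0, hD⟩ := bdd_rZ hq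
  have lim1 : Filter.Tendsto (fun n => ∑' j, cJ q x n j) Filter.atTop
      (nhds (∑' j : ℤ, q ^ (j ^ 2) * x ^ j * (gP (q ^ 2) * (gP (q ^ 2))⁻¹ * (gP (q ^ 2))⁻¹))) := by
    refine tendsto_tsum_of_dominated_convergence (hs.mul_right (C * D * D)) ?_ ?_
    · intro j
      have t1 : Filter.Tendsto (fun n : ℕ => (n : ℤ) + j) Filter.atTop Filter.atTop :=
        Filter.tendsto_atTop_add_const_right _ _ tendsto_natCast_atTop_atTop
      have t2 : Filter.Tendsto (fun n : ℕ => (n : ℤ) - j) Filter.atTop Filter.atTop := by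
        simpa [sub_eq_add_neg] using
          Filter.tendsto_atTop_add_const_right _ (-j) (tendsto_natCast_atTop_atTop (R := ℤ))
      have t3 : Filter.Tendsto (fun n : ℕ => 2 * n) Filter.atTop Filter.atTop :=
        Filter.tendsto_id.const_mul_atTop' (by norm_num)
      exact ((((hN_tendsto hq).comp t3).mul ((rZ_tendsto hq).comp t1)).mul
        ((rZ_tendsto hq).comp t2)).const_mul _
    · refine Filter.Eventually.of_forall fun n j => ?_
      unfold cJ
      rw [norm_mul (q ^ (j ^ 2) * x ^ j)]
      refine mul_le_mul_of_nonneg_left ?_ (norm_nonneg _)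
      rw [norm_mul, norm_mul]
      have := hC (2 * n)
      have := hD (n + j)
      have := hD (n - j)
      gcongr
      · exact mul_nonneg ((norm_nonneg _).trans (hC 0)) hD0
      · exact (norm_nonneg _).trans (hC 0)
  have lim2 : Filter.Tendsto (fun n => ∑' j, cJ q x n j) Filter.atTop
      (nhds ((∏' k : ℕ, (1 + x * q ^ (2 * k + 1))) * (∏' k : ℕ, (1 + x⁻¹ * q ^ (2 * k + 1))))) := by
    have := ((mult1 hq x 2 1 (by norm_num)).hasProd.tendsto_prod_nat).mul
      ((mult1 hq x⁻¹ 2 1 (by norm_num)).hasProd.tendsto_prod_nat)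
    refine this.congr fun n => ?_
    rw [(finJTP hq hq0 hx n).tsum_eq, GJ, Finset.prod_mul_distrib]
  have := tendsto_nhds_unique lim1 lim2
  rw [tsum_mul_right] at this
  rw [← this]; field_simp

lemma JTP {z τ : ℂ} (hτ : 0 < τ.im) (q x : ℂ) (hq : q = cexp (π * I * τ))
    (hx : x = cexp (2 * π * I * z)) :
    jacobiTheta₂ z τ = gP (q ^ 2) *
      ((∏' k : ℕ, (1 + x * q ^ (2 * k + 1))) * (∏' k : ℕ, (1 + x⁻¹ * q ^ (2 * k + 1)))) := by
  have e : ∀ j : ℤ, jacobiTheta₂_term j z τ = q ^ (j ^ 2) * x ^ j := fun j => by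
    rw [jacobiTheta₂_term, hq, hx, ← Complex.exp_int_mul, ← Complex.exp_int_mul, ← Complex.exp_add]
    congr 1; push_cast; ring
  have hs := ((summable_jacobiTheta₂_term_iff z τ).mpr hτ).norm
  simp_rw [e] at hs
  have hq1 : ‖q‖ < 1 := by
    rw [hq, Complex.norm_exp]
    simp
    positivity
  rw [← JTP_aux hq1 (hq ▸ Complex.exp_ne_zero _) (hx ▸ Complex.exp_ne_zero _) hs, jacobiTheta₂]
  exact tsum_congr e

lemma J_half {τ : ℂ} (hτ : 0 < τ.im) : jacobiTheta₂ (1 / 2) τ = pP (cexp (π * I * τ)) := by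
  have hq1 : ‖cexp (π * I * τ)‖ < 1 := by
    rw [Complex.norm_exp]; simp; positivity
  rw [JTP hτ _ (-1) rfl, pP_eq hq1, oddM]
  · simp [sub_eq_add_neg, inv_neg]; ring
  · rw [← Complex.exp_pi_mul_I]; congr 1; ring

lemma J_tau {τ : ℂ} (hτ : 0 < τ.im) : jacobiTheta₂ (τ / 2) τ =
    2 * gP (cexp (π * I * τ) ^ 4) ^ 2 / gP (cexp (π * I * τ) ^ 2) := by
  have hq1 : ‖cexp (π * I * τ)‖ < 1 := by
    rw [Complex.norm_exp]; simp; positivity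
  rw [JTP hτ _ (cexp (π * I * τ)) rfl (by congr 1; ring)]
  have hq0 := Complex.exp_ne_zero (π * I * τ)
  generalize cexp (π * I * τ) = q at *
  have h2 := nlt hq1 2 (by norm_num)
  have hg := gP_ne h2
  have e1 : (∏' k : ℕ, (1 + q * q ^ (2 * k + 1))) = evP (q ^ 2) := by
    refine tprod_congr fun k => ?_
    rw [← pow_mul]; ring
  have e2 : (∏' k : ℕ, (1 + q⁻¹ * q ^ (2 * k + 1))) = 2 * evP (q ^ 2) := by
    have e3 : ∀ k : ℕ, 1 + q⁻¹ * q ^ (2 * k + 1) = 1 + (q ^ 2) ^ k := fun k => by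
      rw [pow_succ, ← pow_mul]; field_simp
    simp_rw [e3]
    rw [tprod_eq_zero_mul']
    · norm_num [evP]
    · exact mult_e h2
  have e4 := evg h2
  rw [← pow_mul] at e4
  norm_num at e4
  rw [e1, e2, ← e4]
  field_simp

lemma J_zero {τ : ℂ} (hτ : 0 < τ.im) : jacobiTheta₂ 0 τ = pP (-cexp (π * I * τ)) := by
  have h := J_half (τ := τ + 1) (by simpa using hτ)
  rw [mul_add, Complex.exp_add, mul_one, Complex.exp_pi_mul_I, mul_neg_one] at h
  rw [← h, jacobiTheta₂, jacobiTheta₂]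
  refine tsum_congr fun n => ?_
  rw [jacobiTheta₂_term, jacobiTheta₂_term, Complex.exp_eq_exp_iff_exists_int]
  obtain ⟨k, hk⟩ : ∃ k, n ^ 2 + n = 2 * k := by
    have := Int.even_mul_succ_self n
    obtain ⟨k, hk⟩ := this
    exact ⟨k, by nlinarith⟩
  refine ⟨-k, ?_⟩
  have hk' : (n : ℂ) ^ 2 + n = 2 * k := by exact_mod_cast hk
  push_cast
  linear_combination -(π * I : ℂ) * hk'

lemma J_split {τ : ℂ} (hτ : 0 < τ.im) : jacobiTheta₂ 0 τ =
    jacobiTheta₂ 0 (4 * τ) + cexp (π * I * τ) * jacobiTheta₂ (4 * τ / 2) (4 * τ) := by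
  have h4 : 0 < (4 * τ).im := by simpa using hτ
  have hE := hasSum_jacobiTheta₂_term 0 h4
  have hO := (hasSum_jacobiTheta₂_term (4 * τ / 2) h4).mul_left (cexp (π * I * τ))
  have hA := hasSum_jacobiTheta₂_term 0 hτ
  refine hA.unique ?_
  have i1 : Function.Injective (fun n : ℤ => 2 * n) := fun a b h => by simpa using h
  have i2 : Function.Injective (fun n : ℤ => 2 * n + 1) := fun a b h => by simpa using h
  refine HasSum.add_isCompl (s := Set.range fun n : ℤ => 2 * n) (t := Set.range fun n : ℤ => 2 * n + 1)
    ?_ ?_ ?_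
  · have r1 : (Set.range fun n : ℤ => 2 * n) = {n | Even n} := by
      ext n; simp only [Set.mem_range, Set.mem_ofPred_eq, even_iff_exists_two_mul, eq_comm]
    have r2 : (Set.range fun n : ℤ => 2 * n + 1) = {n | Odd n} := by
      ext n; simp only [Set.mem_range, Set.mem_ofPred_eq, Odd, eq_comm]
    rw [r1, r2]; exact Int.isCompl_even_odd
  · refine (i1.hasSum_range_iff (f := fun n => jacobiTheta₂_term n 0 τ)).mpr ?_
    have e : ((fun n => jacobiTheta₂_term n 0 τ) ∘ fun n : ℤ => 2 * n)
        = fun n => jacobiTheta₂_term n 0 (4 * τ) := by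
      funext n
      simp only [Function.comp, jacobiTheta₂_term]
      congr 1; push_cast; ring
    rw [e]; exact hE
  · refine (i2.hasSum_range_iff (f := fun n => jacobiTheta₂_term n 0 τ)).mpr ?_
    have e : ((fun n => jacobiTheta₂_term n 0 τ) ∘ fun n : ℤ => 2 * n + 1)
        = fun n => cexp (π * I * τ) * jacobiTheta₂_term n (4 * τ / 2) (4 * τ) := by
      funext n
      simp only [Function.comp, jacobiTheta₂_term]
      rw [← Complex.exp_add]
      congr 1; push_cast; ring
    rw [e]; exact hO


noncomputable def qt (τ : ℂ) : ℂ := cexp (2 * π * I * τ)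
noncomputable def tA (q : ℂ) : ℂ := pP (-q) ^ 2
noncomputable def tB (q : ℂ) : ℂ := pP q ^ 2
noncomputable def zf (q : ℂ) : ℂ := -64 * q * gP (q ^ 2) ^ 24 / gP q ^ 24
noncomputable def eF (q : ℂ) : ℂ := 2 * tA q ^ 2 - tB q ^ 2

lemma exists_tau {q : ℂ} (hq : ‖q‖ < 1) (h0 : q ≠ 0) : ∃ τ : ℂ, 0 < τ.im ∧ cexp (π * I * τ) = q := by
  have hpi : (π : ℂ) ≠ 0 := by exact_mod_cast Real.pi_ne_zero
  refine ⟨Complex.log q / (π * I), ?_, ?_⟩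
  · have : Complex.log q / (π * I) = (-(1/π : ℝ) : ℂ) * (I * Complex.log q) := by
      push_cast; field_simp; simp
    rw [this]
    have h1 : Real.log ‖q‖ < 0 := Real.log_neg (norm_pos_iff.mpr h0) hq
    have : ((-(1/π : ℝ) : ℂ) * (I * Complex.log q)).im = -(1/π) * Real.log ‖q‖ := by
      rw [← Complex.ofReal_neg, Complex.im_ofReal_mul]; simp [Complex.log_re]
    rw [this]
    have := Real.pi_pos
    have : 0 < 1/π := by positivity
    nlinarith
  · have : π * I * (Complex.log q / (π * I)) = Complex.log q := by field_simp
    rw [this, Complex.exp_log h0]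

lemma pP_split {q : ℂ} (hq : ‖q‖ < 1) :
    pP (-q) = pP (-q ^ 4) + 2 * q * gP (q ^ 16) ^ 2 / gP (q ^ 8) := by
  by_cases h0 : q = 0
  · subst h0; simp
  obtain ⟨τ, hτ, rfl⟩ := exists_tau hq h0
  have h4 : 0 < (4 * τ).im := by simpa using hτ
  have h := J_split hτ
  have e : cexp (π * I * (4 * τ)) = cexp (π * I * τ) ^ 4 := by
    rw [← Complex.exp_nat_mul]; congr 1; push_cast; ring
  rw [J_zero hτ, J_zero h4, J_tau h4, e, ← pow_mul, ← pow_mul] at h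
  rw [h]; norm_num; ring

lemma pP_split' {q : ℂ} (hq : ‖q‖ < 1) :
    pP q = pP (-q ^ 4) - 2 * q * gP (q ^ 16) ^ 2 / gP (q ^ 8) := by
  have h := pP_split (q := -q) (by simpa using hq)
  rw [neg_neg] at h
  rw [h]
  have e1 : (-q) ^ 4 = q ^ 4 := by ring
  have e2 : (-q) ^ 16 = q ^ 16 := by ring
  have e3 : (-q) ^ 8 = q ^ 8 := by ring
  rw [e1, e2, e3]; ring

lemma pP_prodI {q : ℂ} (hq : ‖q‖ < 1) :
    pP (-q ^ 4) ^ 2 + (2 * q * gP (q ^ 16) ^ 2 / gP (q ^ 8)) ^ 2 = pP (-q ^ 2) ^ 2 := by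
  have hI : ‖I * q‖ < 1 := by simpa using hq
  have h1 := pP_split hI
  have h2 := pP_split' hI
  have h3 := pP_mul hI
  have e0 : (I * q) ^ 2 = -q ^ 2 := by rw [mul_pow, I_sq]; ring
  have e1 : (I * q) ^ 4 = q ^ 4 := by rw [show 4 = 2 * 2 from rfl, pow_mul, e0]; ring
  have e2 : (I * q) ^ 16 = q ^ 16 := by rw [show 16 = 2 * 8 from rfl, pow_mul, e0]; ring
  have e3 : (I * q) ^ 8 = q ^ 8 := by rw [show 8 = 2 * 4 from rfl, pow_mul, e0]; ring
  rw [e1, e2, e3] at h1 h2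
  rw [h1, h2, e0] at h3
  rw [← h3]
  have : I ^ 2 = -1 := I_sq
  linear_combination ((2 * q * gP (q ^ 16) ^ 2 / gP (q ^ 8)) ^ 2) * this

lemma tAB_add {q : ℂ} (hq : ‖q‖ < 1) : tA q + tB q = 2 * tA (q ^ 2) := by
  unfold tA tB
  rw [← pP_prodI hq, pP_split hq, pP_split' hq]; ring

lemma tAB_mul {q : ℂ} (hq : ‖q‖ < 1) : tA q * tB q = tB (q ^ 2) ^ 2 := by
  unfold tA tB
  rw [← pP_mul hq]; ring

lemma tAB_sub {q : ℂ} (hq : ‖q‖ < 1) :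
    tA q - tB q = 8 * q * pP (-q ^ 4) * gP (q ^ 16) ^ 2 / gP (q ^ 8) := by
  unfold tA tB
  rw [pP_split hq, pP_split' hq]; ring

lemma tAB_sub2 {q : ℂ} (hq : ‖q‖ < 1) :
    tA q ^ 2 - tB q ^ 2 = 16 * q * gP (q ^ 4) ^ 8 / gP (q ^ 2) ^ 4 := by
  have h1 := tAB_sub hq
  have h2 := tAB_add hq
  have n2 := gP_ne (nlt hq 2 (by norm_num))
  have n4 := gP_ne (nlt hq 4 (by norm_num))
  have n8 := gP_ne (nlt hq 8 (by norm_num))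
  have n16 := gP_ne (nlt hq 16 (by norm_num))
  have : tA q ^ 2 - tB q ^ 2 = (tA q - tB q) * (tA q + tB q) := by ring
  rw [this, h1, h2, tA, pP_neg_eq (nlt hq 4 (by norm_num)), pP_neg_eq (nlt hq 2 (by norm_num))]
  rw [← pow_mul, ← pow_mul, ← pow_mul, ← pow_mul]
  norm_num
  field_simp
  ring

lemma tB_ne {q : ℂ} (hq : ‖q‖ < 1) : tB q ≠ 0 := pow_ne_zero _ (pP_ne hq)
lemma tA_ne {q : ℂ} (hq : ‖q‖ < 1) : tA q ≠ 0 := pow_ne_zero _ (pP_ne (by simpa using hq))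

lemma zf_eq {q : ℂ} (hq : ‖q‖ < 1) :
    zf q = -4 * tA q ^ 2 * (tA q ^ 2 - tB q ^ 2) / tB q ^ 4 := by
  have n1 := gP_ne hq
  have n2 := gP_ne (nlt hq 2 (by norm_num))
  have n4 := gP_ne (nlt hq 4 (by norm_num))
  rw [tAB_sub2 hq, zf, tA, tB, pP_neg_eq hq, pP]
  field_simp
  ring

lemma one_sub_zf {q : ℂ} (hq : ‖q‖ < 1) : 1 - zf q = eF q ^ 2 / (tB q ^ 2) ^ 2 := by
  have := tB_ne hq
  rw [zf_eq hq, eF]; field_simp; ring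

lemma eF_eq {q : ℂ} (hq : ‖q‖ < 1) : gP (q ^ 2) ^ 4 * eF q = gP q ^ 8 + 32 * q * gP (q ^ 4) ^ 8 := by
  have n2 := gP_ne (nlt hq 2 (by norm_num))
  have : eF q = tB q ^ 2 + 2 * (tA q ^ 2 - tB q ^ 2) := by rw [eF]; ring
  rw [this, tAB_sub2 hq, tB, pP]; field_simp; ring

lemma qt_norm {τ : ℂ} (h : 0 < τ.im) : ‖qt τ‖ < 1 := by
  rw [qt, Complex.norm_exp]; simp; positivity

lemma w_im {τ : ℂ} (h : 0 < τ.im) : 0 < (-1 / (2 * τ)).im := by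
  have h0 : τ ≠ 0 := by rintro rfl; simp at h
  have hn : 0 < normSq τ := normSq_pos.mpr h0
  have e : -1 / (2 * τ) = ((-(1/2) : ℝ) : ℂ) * τ⁻¹ := by push_cast; field_simp
  rw [e, im_ofReal_mul, inv_im]
  have : 0 < τ.im / normSq τ := by positivity
  rw [neg_div]; linarith

lemma Fe {τ : ℂ} (h : 0 < τ.im) : tB (qt (-1 / (2 * τ))) ^ 2 =
    -16 * τ ^ 2 * cexp (π * I * τ) * gP (qt τ ^ 2) ^ 8 / gP (qt τ) ^ 4 := by
  have h0 : τ ≠ 0 := by rintro rfl; simp at h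
  have n1 := gP_ne (qt_norm h)
  have hw : 0 < (-1 / τ).im := by
    have := w_im h
    have e : -1 / τ = ((2 : ℝ) : ℂ) * (-1 / (2 * τ)) := by push_cast; field_simp
    rw [e, im_ofReal_mul]; linarith
  have f := jacobiTheta₂_functional_equation (τ / 2) τ
  have e1 : τ / 2 / τ = 1 / 2 := by field_simp
  have e2 : cexp (π * I * τ) ^ 2 = qt τ := by
    rw [qt, ← Complex.exp_nat_mul]; congr 1; push_cast; ring
  have e3 : cexp (π * I * (-1 / τ)) = qt (-1 / (2 * τ)) := by
    rw [qt]; congr 1; field_simp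
  have e4 : cexp (π * I * τ) ^ 4 = qt τ ^ 2 := by rw [← e2]; ring
  rw [e1, J_tau h, J_half hw, e3, e2, e4] at f
  have c0 : -I * τ ≠ 0 := by simp [h0]
  have c1 : ((-I * τ) ^ (1 / 2 : ℂ)) ^ 4 = -τ ^ 2 := by
    rw [← Complex.cpow_nat_mul]
    norm_num
    rw [mul_pow, I_sq]; ring
  have c2 : cexp (-π * I * (τ / 2) ^ 2 / τ) ^ 4 * cexp (π * I * τ) = 1 := by
    rw [← Complex.exp_nat_mul, ← Complex.exp_add]
    convert Complex.exp_zero using 2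
    push_cast; field_simp; ring
  have c3 : (-I * τ) ^ (1 / 2 : ℂ) ≠ 0 := by
    intro hh; rw [hh] at c1; simp [h0] at c1
  have f4 := congrArg (· ^ 4) f
  simp only [mul_pow, div_pow, c1, one_pow] at f4
  rw [tB]
  have f5 : -τ ^ 2 * (16 * (gP (qt τ ^ 2) ^ 8 / gP (qt τ) ^ 4)) =
     cexp (-π * I * (τ / 2) ^ 2 / τ) ^ 4 * pP (qt (-1 / (2 * τ))) ^ 4 := by
    have : (2 : ℂ) ^ 4 * (gP (qt τ ^ 2) ^ 2) ^ 4 / gP (qt τ) ^ 4 = 16 * (gP (qt τ ^ 2) ^ 8 / gP (qt τ) ^ 4) := by ring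
    have f4' := f4
    simp only [neg_mul] at f4' ⊢
    rw [← this, ]
    rw [show (2 : ℂ) ^ 4 * (gP (qt τ ^ 2) ^ 2) ^ 4 / gP (qt τ) ^ 4 = _ from f4]
    field_simp
  linear_combination (-(pP (qt (-1 / (2 * τ))) ^ 4)) * c2 - cexp (π * I * τ) * f5

lemma S_ratio {τ : ℂ} (h : 0 < τ.im) :
    (tB (qt (-1 / (2 * τ))) ^ 2 / tB (qt τ) ^ 2) ^ 2 = -4 * τ ^ 4 * zf (qt τ) := by
  have n1 := gP_ne (qt_norm h)
  have n2 := gP_ne (nlt (qt_norm h) 2 (by norm_num))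
  have e2 : cexp (π * I * τ) ^ 2 = qt τ := by
    rw [qt, ← Complex.exp_nat_mul]; congr 1; push_cast; ring
  rw [Fe h, zf, tB, pP]
  generalize cexp (π * I * τ) = u at *
  field_simp
  rw [e2]; ring

lemma zf_zf {τ : ℂ} (h : 0 < τ.im) : zf (qt τ) * zf (qt (-1 / (2 * τ))) = 1 := by
  have h0 : τ ≠ 0 := by rintro rfl; simp at h
  have hw := w_im h
  have a := S_ratio h
  have b := S_ratio hw
  have e : -1 / (2 * (-1 / (2 * τ))) = τ := by field_simp
  rw [e] at b
  have t1 := tB_ne (qt_norm h)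
  have t2 := tB_ne (qt_norm hw)
  have hwt : (-1 / (2 * τ)) * τ = -1/2 := by field_simp
  generalize -1 / (2 * τ) = w at *
  have c : (tB (qt w) ^ 2 / tB (qt τ) ^ 2) ^ 2 *
    (tB (qt τ) ^ 2 / tB (qt w) ^ 2) ^ 2 = 1 := by field_simp
  rw [a, b] at c
  have : (w * τ) ^ 4 = 1/16 := by rw [hwt]; norm_num
  linear_combination c - 16 * zf (qt τ) * zf (qt w) * this


def Dq (q : ℂ) (f : ℂ → ℂ) (v : ℂ) : Prop := ∃ f', HasDerivAt f f' q ∧ q * f' = v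

lemma Dq.val {q : ℂ} {f : ℂ → ℂ} {v w : ℂ} (h : Dq q f v) (e : v = w) : Dq q f w := e ▸ h
lemma Dq.uniq {q : ℂ} {f : ℂ → ℂ} {v w : ℂ} (h : Dq q f v) (h' : Dq q f w) : v = w := by
  obtain ⟨a, ha, rfl⟩ := h
  obtain ⟨b, hb, rfl⟩ := h'
  rw [ha.unique hb]
lemma Dq.of_diff {q : ℂ} {f : ℂ → ℂ} (h : DifferentiableAt ℂ f q) : Dq q f (q * deriv f q) :=
  ⟨_, h.hasDerivAt, rfl⟩
lemma Dq.congr {q : ℂ} {f g : ℂ → ℂ} {v : ℂ} (h : Dq q f v) (e : g =ᶠ[nhds q] f) : Dq q g v := by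
  obtain ⟨a, ha, rfl⟩ := h
  exact ⟨a, ha.congr_of_eventuallyEq e, rfl⟩
lemma Dq.deriv {q : ℂ} {f : ℂ → ℂ} {v : ℂ} (h : Dq q f v) : q * deriv f q = v := by
  obtain ⟨a, ha, rfl⟩ := h
  rw [ha.deriv]
lemma Dq.const (q c : ℂ) : Dq q (fun _ => c) 0 := ⟨0, hasDerivAt_const _ _, by simp⟩
lemma Dq.add {q : ℂ} {f g : ℂ → ℂ} {v w : ℂ} (h : Dq q f v) (h' : Dq q g w) :
    Dq q (fun x => f x + g x) (v + w) := by
  obtain ⟨a, ha, rfl⟩ := h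
  obtain ⟨b, hb, rfl⟩ := h'
  exact ⟨_, ha.add hb, by ring⟩
lemma Dq.sub {q : ℂ} {f g : ℂ → ℂ} {v w : ℂ} (h : Dq q f v) (h' : Dq q g w) :
    Dq q (fun x => f x - g x) (v - w) := by
  obtain ⟨a, ha, rfl⟩ := h
  obtain ⟨b, hb, rfl⟩ := h'
  exact ⟨_, ha.sub hb, by ring⟩
lemma Dq.mul {q : ℂ} {f g : ℂ → ℂ} {v w : ℂ} (h : Dq q f v) (h' : Dq q g w) :
    Dq q (fun x => f x * g x) (v * g q + f q * w) := by
  obtain ⟨a, ha, rfl⟩ := h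
  obtain ⟨b, hb, rfl⟩ := h'
  exact ⟨_, ha.mul hb, by ring⟩
lemma Dq.cmul {q : ℂ} {f : ℂ → ℂ} {v : ℂ} (c : ℂ) (h : Dq q f v) :
    Dq q (fun x => c * f x) (c * v) := by
  obtain ⟨a, ha, rfl⟩ := h
  exact ⟨_, ha.const_mul c, by ring⟩
lemma Dq.pow {q : ℂ} {f : ℂ → ℂ} {v : ℂ} (h : Dq q f v) (n : ℕ) :
    Dq q (fun x => f x ^ n) (n * f q ^ (n - 1) * v) := by
  obtain ⟨a, ha, rfl⟩ := h
  exact ⟨_, ha.pow n, by ring⟩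
lemma Dq.div {q : ℂ} {f g : ℂ → ℂ} {v w : ℂ} (h : Dq q f v) (h' : Dq q g w) (h0 : g q ≠ 0) :
    Dq q (fun x => f x / g x) ((v * g q - f q * w) / g q ^ 2) := by
  obtain ⟨a, ha, rfl⟩ := h
  obtain ⟨b, hb, rfl⟩ := h'
  exact ⟨_, ha.div hb h0, by ring⟩
lemma Dq.comp_sq {q : ℂ} {f : ℂ → ℂ} {v : ℂ} (h : Dq (q ^ 2) f v) :
    Dq q (fun x => f (x ^ 2)) (2 * v) := by
  obtain ⟨a, ha, rfl⟩ := h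
  have h2 : HasDerivAt (fun x : ℂ => x ^ 2) (2 * q) q := by simpa using hasDerivAt_pow 2 q
  exact ⟨_, HasDerivAt.comp q ha h2, by ring⟩

lemma pP_ana {q : ℂ} (hq : ‖q‖ < 1) : AnalyticAt ℂ pP q := by
  have h2 : AnalyticAt ℂ (fun x : ℂ => gP (x ^ 2)) q :=
    AnalyticAt.fun_comp (gP_ana (nlt hq 2 (by norm_num))) (by fun_prop)
  exact ((gP_ana hq).pow 2).div h2 (gP_ne (nlt hq 2 (by norm_num)))
lemma tB_ana {q : ℂ} (hq : ‖q‖ < 1) : AnalyticAt ℂ tB q := (pP_ana hq).pow 2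
lemma tA_ana {q : ℂ} (hq : ‖q‖ < 1) : AnalyticAt ℂ tA q := by
  have : AnalyticAt ℂ (fun x : ℂ => pP (-x)) q :=
    AnalyticAt.fun_comp (pP_ana (by simpa using hq)) (by fun_prop)
  exact this.pow 2
lemma eF_ana {q : ℂ} (hq : ‖q‖ < 1) : AnalyticAt ℂ eF q :=
  (((tA_ana hq).pow 2).fun_const_smul (c := (2 : ℂ))).sub ((tB_ana hq).pow 2)
lemma zf_ana {q : ℂ} (hq : ‖q‖ < 1) : AnalyticAt ℂ zf q := by
  have h2 : AnalyticAt ℂ (fun x : ℂ => gP (x ^ 2)) q :=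
    AnalyticAt.fun_comp (gP_ana (nlt hq 2 (by norm_num))) (by fun_prop)
  have h1 := gP_ana hq
  exact ((analyticAt_const.mul analyticAt_id).mul (h2.pow 24)).div (h1.pow 24)
    (pow_ne_zero _ (gP_ne hq))
lemma tA_zero : tA 0 = 1 := by simp [tA, pP_zero]
lemma tB_zero : tB 0 = 1 := by simp [tB, pP_zero]
lemma eF_zero : eF 0 = 1 := by simp [eF, tA_zero, tB_zero]; norm_num
lemma zf_zero : zf 0 = 0 := by simp [zf]

noncomputable def al (q : ℂ) : ℂ := q * deriv tA q / tA q
noncomputable def be (q : ℂ) : ℂ := q * deriv tB q / tB q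
lemma al_ana {q : ℂ} (hq : ‖q‖ < 1) : AnalyticAt ℂ al q :=
  (analyticAt_id.mul (tA_ana hq).deriv).div (tA_ana hq) (tA_ne hq)
lemma be_ana {q : ℂ} (hq : ‖q‖ < 1) : AnalyticAt ℂ be q :=
  (analyticAt_id.mul (tB_ana hq).deriv).div (tB_ana hq) (tB_ne hq)
lemma DtA {q : ℂ} (hq : ‖q‖ < 1) : Dq q tA (al q * tA q) :=
  (Dq.of_diff (tA_ana hq).differentiableAt).val (by rw [al, div_mul_cancel₀ _ (tA_ne hq)])
lemma DtB {q : ℂ} (hq : ‖q‖ < 1) : Dq q tB (be q * tB q) :=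
  (Dq.of_diff (tB_ana hq).differentiableAt).val (by rw [be, div_mul_cancel₀ _ (tB_ne hq)])

lemma ev_ball {q : ℂ} (hq : ‖q‖ < 1) : ∀ᶠ x in nhds q, ‖x‖ < 1 :=
  (isOpen_lt continuous_norm continuous_const).mem_nhds hq

lemma al_sq {q : ℂ} (hq : ‖q‖ < 1) : 
    2 * (tA q + tB q) * al (q ^ 2) = al q * tA q + be q * tB q := by
  have h2 := nlt hq 2 (by norm_num)
  have h := (DtA h2).comp_sq.cmul 2
  have h' := (DtA hq).add (DtB hq)
  have := h.uniq (h'.congr ((ev_ball hq).mono fun x hx => (tAB_add hx).symm))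
  rw [← this, tAB_add hq]; ring

lemma be_sq {q : ℂ} (hq : ‖q‖ < 1) : 4 * be (q ^ 2) = al q + be q := by
  have h2 := nlt hq 2 (by norm_num)
  have h := (DtB h2).comp_sq.pow 2
  have h' := (DtA hq).mul (DtB hq)
  have := h.uniq (h'.congr ((ev_ball hq).mono fun x hx => (tAB_mul hx).symm))
  have hm := tAB_mul hq
  have n1 := tB_ne hq
  have n2 := tA_ne hq
  simp at this
  apply mul_left_cancel₀ (mul_ne_zero n2 n1)
  linear_combination 4 * be (q^2) * hm + this

/-- functional equation rigidity -/
lemma ord0 {n c : ℂ → ℂ} (hn : AnalyticAt ℂ n 0) (hc : ContinuousAt c 0) (h0 : n 0 = 0)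
    (h : ∀ᶠ q in nhdsWithin (0:ℂ) {0}ᶜ, n q = c q * n (q ^ 2)) : ∀ᶠ q in nhds (0:ℂ), n q = 0 := by
  by_contra hcon
  have ht : analyticOrderAt n 0 ≠ ⊤ := fun h => hcon (analyticOrderAt_eq_top.mp h)
  obtain ⟨v, hv, hv0, hv1⟩ := (hn.analyticOrderAt_ne_top).mp ht
  set m := analyticOrderNatAt n 0
  have hm : m ≠ 0 := by
    intro hm; 
    have := hv1.self_of_nhds
    rw [hm, h0] at this; simp at this; exact hv0 this.symm
  have sq0 : Filter.Tendsto (fun q : ℂ => q ^ 2) (nhds 0) (nhds 0) := by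
    have : Continuous (fun q : ℂ => q ^ 2) := by fun_prop
    simpa using this.tendsto 0
  have key : ∀ᶠ q in nhdsWithin (0:ℂ) {0}ᶜ, v q = c q * q ^ m * v (q ^ 2) := by
    filter_upwards [h, hv1.filter_mono nhdsWithin_le_nhds,
      (sq0.eventually hv1).filter_mono nhdsWithin_le_nhds, self_mem_nhdsWithin] with q a b d hq
    rw [b, d] at a
    simp only [sub_zero, smul_eq_mul] at a
    have : q ^ m ≠ 0 := pow_ne_zero _ hq
    apply mul_left_cancel₀ this
    rw [a]; ring
  have t1 : Filter.Tendsto v (nhdsWithin (0:ℂ) {0}ᶜ) (nhds (v 0)) :=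
    hv.continuousAt.tendsto.mono_left nhdsWithin_le_nhds
  have t2 : Filter.Tendsto (fun q => c q * q ^ m * v (q ^ 2)) (nhdsWithin (0:ℂ) {0}ᶜ)
      (nhds (c 0 * 0 ^ m * v 0)) := by
    refine Filter.Tendsto.mono_left ?_ nhdsWithin_le_nhds
    refine (hc.tendsto.mul ?_).mul (hv.continuousAt.tendsto.comp sq0)
    exact (continuous_pow m).tendsto 0
  have := tendsto_nhds_unique (t1.congr' key) t2
  rw [zero_pow hm] at this
  simp at this; exact hv0 this


noncomputable def dF (q : ℂ) : ℂ := 8 * pP (-q ^ 4) * gP (q ^ 16) ^ 2 / gP (q ^ 8)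
lemma dF_ana : AnalyticAt ℂ dF 0 := by
  have h1 : AnalyticAt ℂ (fun x : ℂ => pP (-x ^ 4)) 0 :=
    AnalyticAt.fun_comp (pP_ana (by simp)) (by fun_prop)
  have h2 : AnalyticAt ℂ (fun x : ℂ => gP (x ^ 16)) 0 :=
    AnalyticAt.fun_comp (gP_ana (by simp)) (by fun_prop)
  have h3 : AnalyticAt ℂ (fun x : ℂ => gP (x ^ 8)) 0 :=
    AnalyticAt.fun_comp (gP_ana (by simp)) (by fun_prop)
  exact ((analyticAt_const.mul h1).mul (h2.pow 2)).div h3 (by simp [gP_zero])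
lemma dF_zero : dF 0 = 8 := by simp [dF, gP_zero, pP_zero]
lemma dF_ne {q : ℂ} (hq : ‖q‖ < 1) : dF q ≠ 0 := by
  have h1 := pP_ne (q := -q ^ 4) (by rw [norm_neg]; exact nlt hq 4 (by norm_num))
  have h2 := gP_ne (nlt hq 16 (by norm_num))
  have h3 := gP_ne (nlt hq 8 (by norm_num))
  unfold dF
  exact div_ne_zero (mul_ne_zero (mul_ne_zero (by norm_num) h1) (pow_ne_zero _ h2)) h3
lemma dF_eq {q : ℂ} (hq : ‖q‖ < 1) : tA q - tB q = q * dF q := by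
  rw [tAB_sub hq, dF]; ring

lemma ev_ball' : ∀ᶠ x in nhdsWithin (0:ℂ) {0}ᶜ, ‖x‖ < 1 :=
  (ev_ball (q := 0) (by simp)).filter_mono nhdsWithin_le_nhds

noncomputable def n1 (q : ℂ) : ℂ := 2 * (deriv tA q / tA q - deriv tB q / tB q) - dF q * (tA q + tB q)

lemma n1_eq {q : ℂ} (hq : ‖q‖ < 1) : q * n1 q = 2 * (al q - be q) - (tA q ^ 2 - tB q ^ 2) := by
  rw [n1, al, be]
  linear_combination (tA q + tB q) * dF_eq hq

lemma deriv0 : deriv tA 0 - deriv tB 0 = 8 := by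
  have z0 : ‖(0:ℂ)‖ < 1 := by simp
  have h1 := ((tA_ana z0).differentiableAt.hasDerivAt).sub ((tB_ana z0).differentiableAt.hasDerivAt)
  have h2 := (hasDerivAt_id (0:ℂ)).mul dF_ana.differentiableAt.hasDerivAt
  have h3 := h1.unique (h2.congr_of_eventuallyEq ((ev_ball z0).mono fun x hx => dF_eq hx))
  rw [h3]; simp [dF_zero]

lemma n1_zero : ∀ᶠ q in nhds (0:ℂ), n1 q = 0 := by
  have z0 : ‖(0:ℂ)‖ < 1 := by simp
  have hA := tA_ana z0
  have hB := tB_ana z0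
  refine ord0 (c := fun q => 4 * (tA q + tB q) / dF q) ?_ ?_ ?_ ?_
  · exact (analyticAt_const.mul ((hA.deriv.div hA (tA_ne z0)).sub
      (hB.deriv.div hB (tB_ne z0)))).sub (dF_ana.mul (hA.add hB))
  · exact ((analyticAt_const.mul (hA.add hB)).div dF_ana (dF_ne z0)).continuousAt
  · rw [n1, tA_zero, tB_zero, dF_zero]
    linear_combination 2 * deriv0
  · filter_upwards [ev_ball', self_mem_nhdsWithin] with q hq h0
    have h2 := nlt hq 2 (by norm_num)
    have e1 := n1_eq hq
    have e2 := n1_eq h2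
    have a := al_sq hq
    have b := be_sq hq
    have d := dF_ne hq
    have s := tAB_add hq
    have m := tAB_mul hq
    have dd := dF_eq hq
    have h0' : q ≠ 0 := h0
    have key : q ^ 2 * (dF q * n1 q) = q ^ 2 * (4 * (tA q + tB q) * n1 (q ^ 2)) := by
      linear_combination (-(q * n1 q)) * dd + (tA q - tB q) * e1 - 4 * (tA q + tB q) * e2
        - 4 * a + 2 * (tA q + tB q) * b - (tA q + tB q) * (tA q + tB q + 2 * tA (q ^ 2)) * s
        + 4 * (tA q + tB q) * m
    have key2 := mul_left_cancel₀ (pow_ne_zero 2 h0') key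
    field_simp
    linear_combination key2

lemma be_al : ∀ᶠ q in nhds (0:ℂ), al q = be q + (tA q ^ 2 - tB q ^ 2) / 2 := by
  filter_upwards [n1_zero, ev_ball (q := 0) (by simp)] with q h hq
  have := n1_eq hq
  rw [h] at this
  linear_combination (-1/2) * this

noncomputable def rF (q : ℂ) : ℂ := 
  4 * (q * deriv be q) - 4 * be q ^ 2 + (tA q ^ 2 - tB q ^ 2) * tA q ^ 2

lemma rF_zero : ∀ᶠ q in nhds (0:ℂ), rF q = 0 := by
  have z0 : ‖(0:ℂ)‖ < 1 := by simp
  have hA := tA_ana z0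
  have hB := tB_ana z0
  refine ord0 (c := fun q => 4) ?_ continuousAt_const ?_ ?_
  · exact ((analyticAt_const.mul (analyticAt_id.mul (be_ana z0).deriv)).sub
      (analyticAt_const.mul ((be_ana z0).pow 2))).add (((hA.pow 2).sub (hB.pow 2)).mul (hA.pow 2))
  · simp [rF, be, tA_zero, tB_zero]
  · have sq0 : Filter.Tendsto (fun q : ℂ => q ^ 2) (nhds 0) (nhds 0) := by
      have : Continuous (fun q : ℂ => q ^ 2) := by fun_prop
      simpa using this.tendsto 0
    refine Filter.Eventually.filter_mono nhdsWithin_le_nhds ?_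
    filter_upwards [ev_ball z0, be_al.eventually_nhds] with q hq he
    have h2 := nlt hq 2 (by norm_num)
    have hbe := Dq.of_diff (be_ana hq).differentiableAt
    have hal := (hbe.add ((((DtA hq).pow 2).sub ((DtB hq).pow 2)).cmul (1/2))).congr
      (g := al) (he.mono fun x hx => by rw [hx]; ring)
    have hbe2 := (Dq.of_diff (be_ana h2).differentiableAt).comp_sq.cmul 4
    have hh := hbe2.uniq ((hal.add hbe).congr ((ev_ball hq).mono fun x hx => be_sq hx))
    have he0 := he.self_of_nhds
    have b := be_sq hq
    have s := tAB_add hq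
    have m := tAB_mul hq
    rw [he0] at hh b
    simp only [rF]
    simp at hh
    generalize deriv be q = d1 at *
    generalize deriv be (q^2) = d2 at *
    rw [← m, show tA (q^2) = (tA q + tB q)/2 by rw [s]; ring, show be (q^2) = (be q + (tA q ^ 2 - tB q ^ 2) / 2 + be q)/4 by rw [← b]; ring]
    linear_combination (-2) * hh

/- ODE -/
noncomputable def sS (q : ℂ) : ℂ := tB q ^ 2
noncomputable def s1 (q : ℂ) : ℂ := 2 * sS q * be q / eF q
noncomputable def s2 (q : ℂ) : ℂ :=
  sS q * (2 * be q ^ 2 + zf q * sS q ^ 2 / 8) / eF q ^ 2 + be q * zf q * sS q ^ 3 / eF q ^ 3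

lemma eF_ne0 : ∀ᶠ q in nhds (0:ℂ), eF q ≠ 0 :=
  (eF_ana (q := 0) (by simp)).continuousAt.eventually_ne (by simp [eF_zero])

lemma base : ∀ᶠ q in nhds (0:ℂ), ‖q‖ < 1 ∧ eF q ≠ 0 ∧ sS q ≠ 0 ∧ 
    Dq q zf (zf q * eF q) ∧ Dq q sS (2 * be q * sS q) ∧
    Dq q eF (2 * be q * eF q - zf q * sS q ^ 2 / 2) ∧ 
    Dq q be (be q ^ 2 + zf q * sS q ^ 2 / 16) ∧ eF q ^ 2 = sS q ^ 2 * (1 - zf q) := by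
  filter_upwards [ev_ball (q := 0) (by simp), eF_ne0, be_al, rF_zero] with q hq he hal hr
  have nB := tB_ne hq
  have hz := zf_eq hq
  have hA := DtA hq
  have hB := DtB hq
  rw [hal] at hA
  have hA2 := hA.pow 2
  have hB2 := hB.pow 2
  refine ⟨hq, he, pow_ne_zero _ nB, ?_, ?_, ?_, ?_, ?_⟩
  · refine ((((hA2.cmul (-4)).mul (hA2.sub hB2)).div (hB.pow 4) (pow_ne_zero _ nB)).congr 
      ((ev_ball hq).mono fun x hx => zf_eq hx)).val ?_
    rw [hz, eF]
    simp
    field_simp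
    ring
  · refine hB2.val ?_
    simp [sS]; ring
  · refine ((hA2.cmul 2).sub hB2).val ?_
    rw [hz, eF, sS]
    simp
    field_simp
    ring
  · refine (Dq.of_diff (be_ana hq).differentiableAt).val ?_
    rw [hz, sS]
    rw [rF] at hr
    field_simp
    linear_combination 4 * hr
  · rw [one_sub_zf hq, sS]; field_simp

lemma zf_ne1 : ∀ᶠ q in nhds (0:ℂ), 1 - zf q ≠ 0 := by
  have : AnalyticAt ℂ (fun q => 1 - zf q) 0 := analyticAt_const.sub (zf_ana (by simp))
  exact this.continuousAt.eventually_ne (by simp [zf_zero])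

lemma ode : ∀ᶠ q in nhds (0:ℂ), Dq q sS (eF q * s1 q) ∧ Dq q s1 (eF q * s2 q) ∧
    Dq q s2 (eF q * zf q / (1 - zf q) * (3/2 * s2 q + 3/4 * s1 q + 1/8 * sS q)) := by
  filter_upwards [base, zf_ne1] with q ⟨hq, he, hS, dz, dS, de, db, ee⟩ h1
  refine ⟨dS.val (by rw [s1]; field_simp), ?_, ?_⟩
  · refine (((dS.cmul 2).mul db).div de he).val ?_
    rw [s2]; field_simp; ring
  · refine (((dS.mul (((db.pow 2).cmul 2).add ((dz.mul (dS.pow 2)).div (Dq.const q 8) (by norm_num)))).div (de.pow 2) (pow_ne_zero _ he)).add 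
      (((db.mul dz).mul (dS.pow 3)).div (de.pow 3) (pow_ne_zero _ he))).val ?_
    rw [s2, s1]
    simp
    generalize eF q = e at *
    generalize zf q = z at *
    generalize sS q = S at *
    generalize be q = b at *
    have hz : z = 1 - e ^ 2 / S ^ 2 := by field_simp; linear_combination ee
    have hz1 : 1 - z = e ^ 2 / S ^ 2 := by rw [hz]; ring
    rw [hz1, hz]
    field_simp
    ring


lemma ord_Dq {f v : ℂ → ℂ} (hf : AnalyticAt ℂ f 0) (h0 : f 0 = 0)
    (h : ∀ᶠ q in nhds (0:ℂ), Dq q f (v q)) : analyticOrderAt v 0 = analyticOrderAt f 0 := by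
  have e : v =ᶠ[nhds 0] (fun q : ℂ => q) * deriv f := by
    filter_upwards [h] with q hq
    rw [← hq.deriv]; rfl
  have h1 := hf.analyticOrderAt_deriv_add_one
  have hid : analyticOrderAt (fun q : ℂ => q) 0 = 1 := analyticOrderAt_id
  rw [analyticOrderAt_congr e, analyticOrderAt_mul (f := fun q : ℂ => q) analyticAt_id hf.deriv, hid, add_comm, h1, h0]
  simp

lemma ord_ode {V0 V1 V2 e z g h : ℂ → ℂ} (m : ℕ) (a0 : AnalyticAt ℂ V0 0) (a1 : AnalyticAt ℂ V1 0)
    (a2 : AnalyticAt ℂ V2 0) (ae : AnalyticAt ℂ e 0) (az : AnalyticAt ℂ z 0) (ag : AnalyticAt ℂ g 0)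
    (ah : AnalyticAt ℂ h 0) (he : e 0 ≠ 0) (hz : z 0 = 0) (h0 : V0 0 = 0)
    (d0 : ∀ᶠ q in nhds (0:ℂ), Dq q V0 (e q * V1 q))
    (d1 : ∀ᶠ q in nhds (0:ℂ), Dq q V1 (e q * V2 q))
    (d2 : ∀ᶠ q in nhds (0:ℂ), Dq q V2 (z q * (g q * (3/2 * V2 q + 3/4 * V1 q + 1/8 * V0 q)) +
      z q ^ (m + 1) * h q)) : ((m + 1 : ℕ) : ℕ∞) ≤ analyticOrderAt V0 0 := by
  have oe : analyticOrderAt e 0 = 0 := ae.analyticOrderAt_eq_zero.mpr he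
  have v1 : V1 0 = 0 := by
    have := d0.self_of_nhds.deriv
    simpa [he] using this.symm
  have v2 : V2 0 = 0 := by
    have := d1.self_of_nhds.deriv
    simpa [he] using this.symm
  have o1 : analyticOrderAt V1 0 = analyticOrderAt V0 0 := by
    rw [← ord_Dq a0 h0 d0, show (fun q => e q * V1 q) = e * V1 from rfl,
      analyticOrderAt_mul ae a1, oe, zero_add]
  have o2 : analyticOrderAt V2 0 = analyticOrderAt V0 0 := by
    rw [← o1, ← ord_Dq a1 v1 d1, show (fun q => e q * V2 q) = e * V2 from rfl,
      analyticOrderAt_mul ae a2, oe, zero_add]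
  have oz : 1 ≤ analyticOrderAt z 0 := by
    rw [Order.one_le_iff_ne_zero]
    exact az.analyticOrderAt_ne_zero.mpr hz
  have ocm : ∀ (c : ℂ) (V : ℂ → ℂ), AnalyticAt ℂ V 0 → 
      analyticOrderAt V 0 ≤ analyticOrderAt (fun q => c * V q) 0 := by
    intro c V hV
    rw [show (fun q => c * V q) = (fun _ => c) * V from rfl, analyticOrderAt_mul analyticAt_const hV]
    exact le_add_self
  have o3 := ord_Dq a2 v2 d2
  rw [o2] at o3
  set o := analyticOrderAt V0 0
  have oin : o ≤ analyticOrderAt (fun q => 3/2 * V2 q + 3/4 * V1 q + 1/8 * V0 q) 0 := by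
    refine le_trans (le_min (le_trans (le_min ?_ ?_) le_analyticOrderAt_add) ?_) le_analyticOrderAt_add
    · rw [← o2]; exact ocm _ _ a2
    · rw [← o1]; exact ocm _ _ a1
    · exact ocm _ _ a0
  have ain : AnalyticAt ℂ (fun q => 3/2 * V2 q + 3/4 * V1 q + 1/8 * V0 q) 0 :=
    ((analyticAt_const.mul a2).add (analyticAt_const.mul a1)).add (analyticAt_const.mul a0)
  have ol : o + 1 ≤ analyticOrderAt (fun q => z q * (g q * (3/2 * V2 q + 3/4 * V1 q + 1/8 * V0 q))) 0 := by
    rw [show (fun q => z q * (g q * (3/2 * V2 q + 3/4 * V1 q + 1/8 * V0 q))) = 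
      z * (g * (fun q => 3/2 * V2 q + 3/4 * V1 q + 1/8 * V0 q)) from rfl,
      analyticOrderAt_mul az (ag.mul ain), analyticOrderAt_mul ag ain, add_comm]
    exact add_le_add oz (oin.trans le_add_self)
  have orr : ((m + 1 : ℕ) : ℕ∞) ≤ analyticOrderAt (fun q => z q ^ (m+1) * h q) 0 := by
    rw [show (fun q => z q ^ (m+1) * h q) = z ^ (m+1) * h from rfl, analyticOrderAt_mul (az.pow _) ah,
      analyticOrderAt_pow az]
    refine le_trans ?_ le_self_add
    calc ((m + 1 : ℕ) : ℕ∞) = (m+1) • 1 := by simp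
      _ ≤ _ := nsmul_le_nsmul_right oz _
  have fin := le_analyticOrderAt_add (f := fun q => z q * (g q * (3/2 * V2 q + 3/4 * V1 q + 1/8 * V0 q)))
    (g := fun q => z q ^ (m+1) * h q) (z₀ := (0:ℂ))
  have fin2 : min (o + 1) ((m + 1 : ℕ) : ℕ∞) ≤ o := by
    refine le_trans (min_le_min ol orr) (fin.trans (le_of_eq ?_))
    rw [← o3]; rfl
  rcases min_le_iff.mp fin2 with h | h
  · have : o = ⊤ := by
      by_contra hne
      exact absurd h (not_le.mpr ((ENat.lt_add_one_iff hne).mpr le_rfl))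
    rw [this]; exact le_top
  · exact h

noncomputable def ck (k : ℕ) : ℂ := poch (1/2) k / (Nat.factorial k : ℂ)
noncomputable def bk (k : ℕ) : ℂ := ck k ^ 3

lemma ck_succ (k : ℕ) : ((k : ℂ) + 1) * ck (k + 1) = (k + 1/2) * ck k := by
  have h1 : ((k : ℂ) + 1) ≠ 0 := by exact_mod_cast k.succ_ne_zero
  have h2 : (Nat.factorial k : ℂ) ≠ 0 := by exact_mod_cast k.factorial_ne_zero
  simp only [ck, poch]
  rw [Finset.prod_range_succ, Nat.factorial_succ]
  push_cast
  field_simp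
  ring
lemma ck_zero : ck 0 = 1 := by simp [ck, poch]
lemma bk_zero : bk 0 = 1 := by simp [bk, ck_zero]
lemma bk_succ (k : ℕ) : ((k : ℂ) + 1) ^ 3 * bk (k + 1) = (k + 1/2) ^ 3 * bk k := by
  rw [bk, bk, ← mul_pow, ← mul_pow, ck_succ]

lemma ck_norm (k : ℕ) : ‖ck k‖ ^ 2 * (2 * k + 1) ≤ 1 := by
  induction k with
  | zero => simp [ck_zero]
  | succ k ih =>
    have h := congrArg norm (ck_succ k)
    rw [norm_mul, norm_mul] at h
    have e1 : ‖(k : ℂ) + 1‖ = k + 1 := by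
      rw [show (k : ℂ) + 1 = ((k + 1 : ℝ) : ℂ) by push_cast; rfl, norm_real, Real.norm_of_nonneg (by positivity)]
    have e2 : ‖(k : ℂ) + 1/2‖ = k + 1/2 := by
      rw [show (k : ℂ) + 1/2 = ((k + 1/2 : ℝ) : ℂ) by push_cast; rfl, norm_real, Real.norm_of_nonneg (by positivity)]
    rw [e1, e2] at h
    have hk : (0:ℝ) < k + 1 := by positivity
    have h3 : ‖ck (k+1)‖ = (k + 1/2) * ‖ck k‖ / (k + 1) := by rw [eq_div_iff hk.ne']; linear_combination h
    rw [h3]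
    have : ((k + 1/2) * ‖ck k‖ / (k + 1)) ^ 2 * (2 * ((k + 1 : ℕ) : ℝ) + 1) = 
      (‖ck k‖ ^ 2 * (2 * k + 1)) * ((2 * k + 1) * (2 * k + 3) / (2 * k + 2) ^ 2) := by
      push_cast; field_simp; ring
    rw [this]
    refine mul_le_one₀ ih (by positivity) ?_
    rw [div_le_one (by positivity)]
    nlinarith

lemma ck_le (k : ℕ) : ‖ck k‖ ≤ 1 := by
  have := ck_norm k
  have h0 := norm_nonneg (ck k)
  by_contra hc
  push Not at hc
  have : (0:ℝ) ≤ k := by positivity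
  nlinarith
lemma bk_le (k : ℕ) : ‖bk k‖ ≤ 1 := by
  rw [bk, norm_pow]; exact pow_le_one₀ (norm_nonneg _) (ck_le k)

lemma bk_summ : Summable fun k => ‖bk k‖ := by
  have hs : Summable fun k : ℕ => 1 / ((k + 1 : ℕ) : ℝ) ^ (3/2 : ℝ) := 
    (summable_nat_add_iff 1).mpr (Real.summable_one_div_nat_rpow.mpr (by norm_num))
  refine Summable.of_nonneg_of_le (fun _ => norm_nonneg _) (fun k => ?_) hs
  have h1 : ‖ck k‖ ^ 2 ≤ 1 / ((k + 1 : ℕ) : ℝ) := by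
    rw [le_div_iff₀ (by positivity)]
    refine le_trans ?_ (ck_norm k)
    push_cast
    have : (0:ℝ) ≤ k := by positivity
    have := sq_nonneg ‖ck k‖
    nlinarith
  have h2 : ‖ck k‖ = (‖ck k‖ ^ 2) ^ (1/2 : ℝ) := by
    rw [← Real.sqrt_eq_rpow, Real.sqrt_sq (norm_nonneg _)]
  have h3 : ‖bk k‖ = (‖ck k‖ ^ 2) ^ (3/2 : ℝ) := by
    rw [bk, norm_pow]
    rw [show (3/2 : ℝ) = (1/2 : ℝ) * (3:ℕ) by norm_num, Real.rpow_mul (by positivity), ← h2, Real.rpow_natCast]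
  rw [h3]
  refine (Real.rpow_le_rpow (by positivity) h1 (by norm_num)).trans (le_of_eq ?_)
  rw [Real.div_rpow (by norm_num) (by positivity), Real.one_rpow]

lemma Dq.sum {q : ℂ} {f : ℕ → ℂ → ℂ} {v : ℕ → ℂ} (n : ℕ) (h : ∀ k, Dq q (f k) (v k)) :
    Dq q (fun x => ∑ k ∈ Finset.range n, f k x) (∑ k ∈ Finset.range n, v k) := by
  induction n with
  | zero => simpa using Dq.const q 0
  | succ n ih => simpa [Finset.sum_range_succ] using ih.add (h n)

noncomputable def tr (i m : ℕ) (z : ℂ) : ℂ := ∑ k ∈ Finset.range (m + 1), (k : ℂ) ^ i * bk k * z ^ k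

lemma tr_D {q : ℂ} {z : ℂ → ℂ} {e : ℂ} (h : Dq q z (z q * e)) (i m : ℕ) :
    Dq q (fun x => tr i m (z x)) (e * tr (i + 1) m (z q)) := by
  refine (Dq.sum (m + 1) fun k => (h.pow k).cmul ((k : ℂ) ^ i * bk k)).val ?_
  rw [tr, Finset.mul_sum]
  refine Finset.sum_congr rfl fun k _ => ?_
  rcases k with _ | k
  · simp
  · simp; ring

lemma tr_rec (m : ℕ) (z : ℂ) : (1 - z) * tr 3 m z =
    z * (3/2 * tr 2 m z + 3/4 * tr 1 m z + 1/8 * tr 0 m z) - (m + 1/2) ^ 3 * bk m * z ^ (m + 1) := by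
  induction m with
  | zero => simp [tr, bk_zero]; ring
  | succ m ih =>
    have e : ∀ i, tr i (m + 1) z = tr i m z + ((m + 1 : ℕ) : ℂ) ^ i * bk (m + 1) * z ^ (m + 1) := by
      intro i; rw [tr, Finset.sum_range_succ]; rfl
    simp only [e]
    have := bk_succ m
    push_cast
    linear_combination ih + z ^ (m + 1) * this

lemma tr_ana {z : ℂ → ℂ} (hz : AnalyticAt ℂ z 0) (i m : ℕ) : AnalyticAt ℂ (fun q => tr i m (z q)) 0 := by
  unfold tr
  exact Finset.analyticAt_fun_sum _ fun k _ => analyticAt_const.mul (hz.pow k)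

lemma sS_ana {q : ℂ} (hq : ‖q‖ < 1) : AnalyticAt ℂ sS q := (tB_ana hq).pow 2

lemma ordS (m : ℕ) : ((m + 1 : ℕ) : ℕ∞) ≤ analyticOrderAt (fun q => sS q - tr 0 m (zf q)) 0 := by
  have z0 : ‖(0:ℂ)‖ < 1 := by simp
  have aS := sS_ana z0
  have ab := be_ana z0
  have az := zf_ana z0
  have ae := eF_ana z0
  have ne : eF 0 ≠ 0 := by simp [eF_zero]
  have a1 : AnalyticAt ℂ s1 0 := ((analyticAt_const.mul aS).mul ab).div ae ne
  have a2 : AnalyticAt ℂ s2 0 := 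
    ((aS.mul ((analyticAt_const.mul (ab.pow 2)).add ((az.mul (aS.pow 2)).div analyticAt_const (by norm_num)))).div 
      (ae.pow 2) (pow_ne_zero _ ne)).add (((ab.mul az).mul (aS.pow 3)).div (ae.pow 3) (pow_ne_zero _ ne))
  have a1z : AnalyticAt ℂ (fun q => 1 - zf q) 0 := analyticAt_const.sub az
  have n1z : (1 - zf 0) ≠ 0 := by simp [zf_zero]
  refine ord_ode (V1 := fun q => s1 q - tr 1 m (zf q)) (V2 := fun q => s2 q - tr 2 m (zf q)) 
    (e := eF) (z := zf) (g := fun q => eF q / (1 - zf q))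
    (h := fun q => eF q / (1 - zf q) * ((m + 1/2) ^ 3 * bk m)) m (aS.sub (tr_ana az _ _)) (a1.sub (tr_ana az _ _)) 
    (a2.sub (tr_ana az _ _)) ae az (ae.div a1z n1z) ((ae.div a1z n1z).mul analyticAt_const) ne zf_zero ?_ ?_ ?_ ?_
  · simp [sS, tB_zero, tr, zf_zero, Finset.sum_range_succ', bk_zero]
  · filter_upwards [ode, base] with q ⟨h0, h1, h2⟩ ⟨_, _, _, dz, _⟩
    exact (h0.sub (tr_D dz 0 m)).val (by ring)
  · filter_upwards [ode, base] with q ⟨h0, h1, h2⟩ ⟨_, _, _, dz, _⟩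
    exact (h1.sub (tr_D dz 1 m)).val (by ring)
  · filter_upwards [ode, base, zf_ne1] with q ⟨h0, h1, h2⟩ ⟨_, _, _, dz, _⟩ hz
    refine (h2.sub (tr_D dz 2 m)).val ?_
    have := tr_rec m (zf q)
    field_simp
    linear_combination (-256) * this

lemma ser_diff {c : ℕ → ℂ} (hc : ∀ k, ‖c k‖ ≤ 1) :
    DifferentiableOn ℂ (fun ζ : ℂ => ∑' k, c k * ζ ^ k) (Metric.ball 0 1) := by
  intro ζ hζ
  rw [mem_ball_zero_iff] at hζ
  obtain ⟨r, hr1, hr2⟩ := exists_between hζ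
  have hr0 : 0 ≤ r := (norm_nonneg _).trans hr1.le
  have h := differentiableOn_tsum_of_summable_norm (F := fun k (ζ : ℂ) => c k * ζ ^ k)
    (U := Metric.ball 0 r) (summable_geometric_of_lt_one hr0 hr2) (fun k => by fun_prop) Metric.isOpen_ball
    (fun k w hw => by
      rw [mem_ball_zero_iff] at hw
      rw [norm_mul, norm_pow]
      calc ‖c k‖ * ‖w‖ ^ k ≤ 1 * r ^ k := by gcongr; exact hc k
        _ = _ := one_mul _)
  exact (h.differentiableAt (Metric.isOpen_ball.mem_nhds (by simpa using hr1))).differentiableWithinAt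

noncomputable def Aser (ζ : ℂ) : ℂ := ∑' k, bk k * ζ ^ k

lemma Aser_ana {ζ : ℂ} (h : ‖ζ‖ < 1) : AnalyticAt ℂ Aser ζ :=
  (ser_diff bk_le).analyticAt (Metric.isOpen_ball.mem_nhds (by simpa using h))

lemma ser_summ {c : ℕ → ℂ} (hc : ∀ k, ‖c k‖ ≤ 1) {ζ : ℂ} (h : ‖ζ‖ < 1) : Summable fun k => c k * ζ ^ k := by
  refine Summable.of_norm_bounded (summable_geometric_of_lt_one (norm_nonneg ζ) h) fun k => ?_
  rw [norm_mul, norm_pow]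
  calc ‖c k‖ * ‖ζ‖ ^ k ≤ 1 * ‖ζ‖ ^ k := by gcongr; exact hc k
    _ = _ := one_mul _

lemma Aser_tail (m : ℕ) {ζ : ℂ} (h : ‖ζ‖ < 1) :
    Aser ζ = tr 0 m ζ + ζ ^ (m + 1) * ∑' k, bk (k + (m + 1)) * ζ ^ k := by
  rw [Aser, ← (ser_summ bk_le h).sum_add_tsum_nat_add (m + 1), tr, ← tsum_mul_left]
  congr 1
  · simp
  · exact tsum_congr fun k => by ring

lemma ev_zf : ∀ᶠ q in nhds (0:ℂ), ‖zf q‖ < 1 := by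
  have := (zf_ana (q := 0) (by simp)).continuousAt.norm
  exact this.eventually_lt_const (by simp [zf_zero])

lemma concl1 : ∀ᶠ q in nhds (0:ℂ), Aser (zf q) = sS q := by
  have z0 : ‖(0:ℂ)‖ < 1 := by simp
  have az := zf_ana z0
  have aA : AnalyticAt ℂ (fun q => Aser (zf q)) 0 :=
    AnalyticAt.fun_comp (Aser_ana (by simp [zf_zero])) az
  have : analyticOrderAt (fun q => sS q - Aser (zf q)) 0 = ⊤ := by
    rw [ENat.eq_top_iff_forall_ge]
    intro m
    have h1 := ordS m
    have tana : AnalyticAt ℂ (fun ζ : ℂ => ∑' k, bk (k + (m + 1)) * ζ ^ k) 0 := 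
      (ser_diff (fun k => bk_le _)).analyticAt (Metric.isOpen_ball.mem_nhds (by simp))
    have tana2 : AnalyticAt ℂ (fun q : ℂ => ∑' k, bk (k + (m + 1)) * zf q ^ k) 0 := 
      AnalyticAt.fun_comp (g := fun ζ : ℂ => ∑' k, bk (k + (m + 1)) * ζ ^ k) (by rw [zf_zero]; exact tana) az
    have oz : 1 ≤ analyticOrderAt zf 0 := by
      rw [Order.one_le_iff_ne_zero]
      exact az.analyticOrderAt_ne_zero.mpr zf_zero
    have h2 : ((m + 1 : ℕ) : ℕ∞) ≤ analyticOrderAt (fun q => zf q ^ (m+1) * ∑' k, bk (k + (m + 1)) * zf q ^ k) 0 := by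
      rw [show (fun q => zf q ^ (m+1) * ∑' k, bk (k + (m + 1)) * zf q ^ k) = 
        zf ^ (m+1) * (fun q => ∑' k, bk (k + (m + 1)) * zf q ^ k) from rfl, analyticOrderAt_mul (az.pow _) tana2,
        analyticOrderAt_pow az]
      refine le_trans ?_ le_self_add
      calc ((m + 1 : ℕ) : ℕ∞) = (m+1) • 1 := by simp
        _ ≤ _ := nsmul_le_nsmul_right oz _
    have h3 := (le_min h1 h2).trans le_analyticOrderAt_sub
    refine le_trans (by exact_mod_cast Nat.le_succ m) (h3.trans (le_of_eq (analyticOrderAt_congr ?_)))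
    filter_upwards [ev_zf] with q hq
    rw [Aser_tail m hq]
    simp; ring
  filter_upwards [analyticOrderAt_eq_top.mp this] with q hq
  linear_combination -hq


lemma zf_ne {q : ℂ} (hq : ‖q‖ < 1) (h0 : q ≠ 0) : zf q ≠ 0 := by
  have h1 := gP_ne hq
  have h2 := gP_ne (nlt hq 2 (by norm_num))
  unfold zf
  exact div_ne_zero (mul_ne_zero (mul_ne_zero (by norm_num) h0) (pow_ne_zero _ h2)) (pow_ne_zero _ h1)

noncomputable def fK (k : ℕ) (q : ℂ) : ℂ := sS q * eF q / zf q ^ k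

lemma fK_diff (k : ℕ) {q : ℂ} (hq : ‖q‖ < 1) (h0 : q ≠ 0) : DifferentiableAt ℂ (fK k) q :=
  (((sS_ana hq).mul (eF_ana hq)).div ((zf_ana hq).pow k) (pow_ne_zero _ (zf_ne hq h0))).differentiableAt

lemma circ_prim {r : ℝ} (hr : 0 < r) (n : ℕ) (hn : n ≠ 0)
    (hb : ∀ q ∈ Metric.closedBall (0:ℂ) r, ‖q‖ < 1 ∧ Dq q zf (zf q * eF q)) :
    (∮ q in C(0, r), (q - 0)⁻¹ • (eF q / zf q ^ n)) = 0 := by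
  refine circleIntegral.integral_eq_zero_of_hasDerivWithinAt (f := fun q => -(1/(n:ℂ)) * (zf q ^ n)⁻¹) hr.le ?_
  intro q hq
  have h0 : q ≠ 0 := by
    rintro rfl; simp at hq; exact hr.ne hq
  obtain ⟨h1, f', hf, hf'⟩ := hb q (Metric.sphere_subset_closedBall hq)
  have hz := zf_ne h1 h0
  have hn' : (n : ℂ) ≠ 0 := by exact_mod_cast hn
  have := ((hf.pow n).inv (pow_ne_zero _ hz)).const_mul (-(1/(n:ℂ)))
  refine HasDerivAt.hasDerivWithinAt ?_
  refine HasDerivAt.congr_deriv this ?_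
  obtain ⟨m, rfl⟩ := Nat.exists_eq_succ_of_ne_zero hn
  have hf2 : f' = zf q * eF q / q := by rw [← hf']; field_simp
  rw [hf2]
  simp only [sub_zero, smul_eq_mul, Nat.succ_eq_add_one, Nat.add_sub_cancel, Pi.pow_apply]
  field_simp
  try ring

lemma circ_small : ∃ ε > 0, ∀ r, 0 < r → r < ε → ∀ k, (∮ q in C(0, r), (q - 0)⁻¹ • fK k q) = 2 * π * I * bk k := by
  have hev := (ev_ball (q := 0) (by simp)).and (ev_zf.and (base.and concl1))
  obtain ⟨ε, hε, hh⟩ := Metric.eventually_nhds_iff_ball.mp hev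
  refine ⟨ε, hε, fun r hr hrε k => ?_⟩
  have hb : ∀ q ∈ Metric.closedBall (0:ℂ) r, ‖q‖ < 1 ∧ ‖zf q‖ < 1 ∧ Dq q zf (zf q * eF q) ∧ Aser (zf q) = sS q := by
    intro q hq
    obtain ⟨a, b, ⟨_, _, _, d, _⟩, e⟩ := hh q (Metric.closedBall_subset_ball hrε hq)
    exact ⟨a, b, d, e⟩
  have hs0 : ∀ q ∈ Metric.sphere (0:ℂ) r, q ≠ 0 := by
    rintro q hq rfl; simp at hq; exact hr.ne hq
  set H : ℂ → ℂ := fun ζ => ∑' i, bk (i + k) * ζ ^ i with hH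
  have Hd := ser_diff (c := fun i => bk (i + k)) (fun i => bk_le _)
  have tail : ∀ ζ : ℂ, ‖ζ‖ < 1 → Aser ζ = (∑ j ∈ Finset.range k, bk j * ζ ^ j) + ζ ^ k * H ζ := by
    intro ζ h
    rw [Aser, ← (ser_summ bk_le h).sum_add_tsum_nat_add k, hH, ← tsum_mul_left]
    congr 1
    exact tsum_congr fun k => by ring
  have gd : ∀ q ∈ Metric.closedBall (0:ℂ) r, DifferentiableAt ℂ (fun q => eF q * H (zf q)) q := by
    intro q hq
    obtain ⟨a, b, _⟩ := hb q hq
    refine (eF_ana a).differentiableAt.fun_mul ?_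
    exact DifferentiableAt.comp q (Hd.differentiableAt (Metric.isOpen_ball.mem_nhds (by simpa using b)))
      (zf_ana a).differentiableAt
  have gcont : ContinuousOn (fun q => eF q * H (zf q)) (Metric.closedBall 0 r) := 
    fun q hq => (gd q hq).continuousAt.continuousWithinAt
  have I1 : (∮ q in C(0, r), (q - 0)⁻¹ • (eF q * H (zf q))) = 2 * π * I * bk k := by
    rw [Complex.circleIntegral_sub_center_inv_smul_of_differentiable_on_off_countable hr 
      Set.countable_empty gcont (fun q hq => gd q (Metric.ball_subset_closedBall hq.1))]
    have : H 0 = bk k := by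
      rw [hH]; simp only
      rw [tsum_eq_single 0]
      · simp
      · intro b hb; simp [hb]
    simp [eF_zero, zf_zero, this]
  have key : Set.EqOn (fun q => (q - 0)⁻¹ • fK k q) (fun q => (∑ j ∈ Finset.range k, bk j * ((q - 0)⁻¹ • (eF q / zf q ^ (k - j)))) + 
      (q - 0)⁻¹ • (eF q * H (zf q))) (Metric.sphere 0 r) := by
    intro q hq
    obtain ⟨a, b, _, d⟩ := hb q (Metric.sphere_subset_closedBall hq)
    have h0 := hs0 q hq
    have hz := zf_ne a h0
    simp only [fK, ← d, tail _ b, smul_eq_mul]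
    rw [add_mul, add_div, mul_add, Finset.sum_mul, Finset.sum_div, Finset.mul_sum]
    congr 1
    · refine Finset.sum_congr rfl fun j hj => ?_
      have : zf q ^ k = zf q ^ (k - j) * zf q ^ j := by
        rw [← pow_add, Nat.sub_add_cancel (Finset.mem_range.mp hj).le]
      rw [this]; field_simp
    · field_simp
  have cinv : ContinuousOn (fun q : ℂ => (q - 0)⁻¹) (Metric.sphere 0 r) := by
    intro q hq
    refine ContinuousAt.continuousWithinAt ?_
    refine ContinuousAt.inv₀ (by fun_prop) (by simpa using hs0 q hq)
  have ci : ∀ j, CircleIntegrable (fun q => bk j * ((q - 0)⁻¹ • (eF q / zf q ^ (k - j)))) 0 r := by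
    intro j
    refine ContinuousOn.circleIntegrable hr.le ?_
    refine continuousOn_const.mul (cinv.smul ?_)
    intro q hq
    obtain ⟨a, b, _, d⟩ := hb q (Metric.sphere_subset_closedBall hq)
    exact ((eF_ana a).div ((zf_ana a).pow _) (pow_ne_zero _ (zf_ne a (hs0 q hq)))).continuousAt.continuousWithinAt
  rw [circleIntegral.integral_congr hr.le key, circleIntegral.integral_add, I1, circleIntegral.integral_fun_sum]
  · rw [Finset.sum_eq_zero, zero_add]
    intro j hj
    rw [circleIntegral.integral_const_mul, circ_prim hr _ _ (fun q hq => ⟨(hb q hq).1, (hb q hq).2.2.1⟩), mul_zero]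
    have := Finset.mem_range.mp hj
    omega
  · exact fun j _ => ci j
  · refine ContinuousOn.circleIntegrable hr.le ?_
    refine continuousOn_finsetSum _ fun j _ => ?_
    refine continuousOn_const.mul (cinv.smul ?_)
    intro q hq
    obtain ⟨a, b, _, d⟩ := hb q (Metric.sphere_subset_closedBall hq)
    exact ((eF_ana a).div ((zf_ana a).pow _) (pow_ne_zero _ (zf_ne a (hs0 q hq)))).continuousAt.continuousWithinAt
  · exact ContinuousOn.circleIntegrable hr.le (cinv.smul (gcont.mono Metric.sphere_subset_closedBall))

lemma circ_big (k : ℕ) {R : ℝ} (hR : 0 < R) (hR1 : R < 1) :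
    (∮ q in C(0, R), (q - 0)⁻¹ • fK k q) = 2 * π * I * bk k := by
  obtain ⟨ε, hε, h⟩ := circ_small
  set r := min ε R / 2 with hr
  have hr0 : 0 < r := by positivity
  have h1 : r < ε := by have := min_le_left ε R; linarith [lt_min hε hR]
  have h2 : r < R := by have := min_le_right ε R; linarith [lt_min hε hR]
  rw [← h r hr0 h1 k]
  have aux : ∀ q ∈ Metric.closedBall (0:ℂ) R \ Metric.ball 0 r, DifferentiableAt ℂ (fK k) q := by
    intro q hq
    refine fK_diff k ?_ ?_
    · have := hq.1; simp at this; linarith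
    · rintro rfl; exact hq.2 (by simpa using hr0)
  refine Complex.circleIntegral_sub_center_inv_smul_eq_of_differentiable_on_annulus_off_countable hr0 h2.le
    Set.countable_empty (fun q hq => (aux q hq).continuousAt.continuousWithinAt) ?_
  intro q hq
  exact aux q ⟨Metric.ball_subset_closedBall hq.1.1, fun hc => hq.1.2 (Metric.ball_subset_closedBall hc)⟩

lemma coeff (k : ℕ) : ∫ t in (-1/2 : ℝ)..(1/2 : ℝ), fK k (qt ((t : ℂ) + I / 2)) = bk k := by
  have hpi : (π : ℂ) ≠ 0 := by exact_mod_cast Real.pi_ne_zero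
  have h := circ_big k (R := Real.exp (-π)) (Real.exp_pos _) (by rw [Real.exp_lt_one_iff]; linarith [Real.pi_pos])
  rw [circleIntegral] at h
  have e1 : ∀ θ : ℝ, deriv (circleMap 0 (Real.exp (-π))) θ • (circleMap 0 (Real.exp (-π)) θ - 0)⁻¹ • 
      fK k (circleMap 0 (Real.exp (-π)) θ) = I * fK k (circleMap 0 (Real.exp (-π)) θ) := by
    intro θ
    have : circleMap 0 (Real.exp (-π)) θ ≠ 0 := circleMap_ne_center (Real.exp_pos _).ne'
    rw [deriv_circleMap]
    simp only [sub_zero, smul_eq_mul]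
    field_simp
  simp_rw [e1] at h
  rw [intervalIntegral.integral_const_mul] at h
  have e2 : ∀ t : ℝ, fK k (qt ((t : ℂ) + I / 2)) = fK k (circleMap 0 (Real.exp (-π)) (2 * π * t)) := by
    intro t
    congr 1
    rw [qt, circleMap, zero_add]
    push_cast
    rw [← Complex.exp_add]
    congr 1
    have := I_sq
    linear_combination π * this
  simp_rw [e2]
  have per : Function.Periodic (fun t : ℝ => fK k (circleMap 0 (Real.exp (-π)) (2 * π * t))) 1 := by
    intro t
    simp only
    congr 1
    rw [mul_add, mul_one]
    exact periodic_circleMap _ _ _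
  have e3 := per.intervalIntegral_add_eq (-1/2) 0
  norm_num at e3
  have e4 := intervalIntegral.integral_comp_mul_left (a := 0) (b := 1) (fun θ : ℝ => fK k (circleMap 0 (Real.exp (-π)) θ)) 
    (c := 2 * π) (by positivity)
  simp only [mul_zero, mul_one] at e4
  have e5 : (∫ θ in (0:ℝ)..(2 * π), fK k (circleMap 0 (Real.exp (-π)) θ)) = 2 * π * bk k := by
    apply mul_left_cancel₀ I_ne_zero
    rw [h]; ring
  rw [e5] at e4
  rw [show (-1/2 : ℝ) = -(1/2) by norm_num]
  refine (e3.trans e4).trans ?_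
  rw [Complex.real_smul]
  push_cast
  field_simp


lemma gP_conj {q : ℂ} (hq : ‖q‖ < 1) : gP (starRingEnd ℂ q) = starRingEnd ℂ (gP q) := by
  have := (mult_g hq).map_tprod (starRingEnd ℂ) continuous_conj
  rw [gP, gP, this]
  simp

lemma zf_conj {q : ℂ} (hq : ‖q‖ < 1) : zf (starRingEnd ℂ q) = starRingEnd ℂ (zf q) := by
  have h2 := nlt hq 2 (by norm_num)
  have h64 : (starRingEnd ℂ) 64 = 64 := map_ofNat (starRingEnd ℂ) 64
  rw [zf, zf, ← map_pow, gP_conj hq, gP_conj h2]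
  simp [h64]

lemma qt_conj (τ : ℂ) : qt (-(starRingEnd ℂ τ)) = starRingEnd ℂ (qt τ) := by
  have h2 : (starRingEnd ℂ) 2 = 2 := map_ofNat (starRingEnd ℂ) 2
  rw [qt, qt, ← Complex.exp_conj]
  congr 1
  simp [h2]

lemma zf_circle {τ : ℂ} (h : 0 < τ.im) (h2 : normSq τ = 1/2) : ‖zf (qt τ)‖ = 1 := by
  have h0 : τ ≠ 0 := by rintro rfl; simp at h
  have hw : -1 / (2 * τ) = -(starRingEnd ℂ τ) := by
    have : τ * (starRingEnd ℂ τ) = 1/2 := by rw [mul_conj, h2]; push_cast; rfl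
    field_simp
    linear_combination 2 * this
  have := zf_zf h
  rw [hw, qt_conj, zf_conj (qt_norm h), mul_conj, normSq_eq_norm_sq] at this
  have h3 : ‖zf (qt τ)‖ ^ 2 = 1 := by exact_mod_cast this
  exact (pow_eq_one_iff_of_nonneg (norm_nonneg _) (by norm_num)).mp h3

lemma gP_real {x : ℝ} (hx : ‖(x:ℂ)‖ < 1) : ∃ r : ℝ, gP x = r := by
  have := gP_conj hx
  rw [conj_ofReal] at this
  exact conj_eq_iff_real.mp this.symm

lemma zf_real {x : ℝ} (h1 : ‖(x:ℂ)‖ < 1) (hx : x ≤ 0) : ‖zf x‖ ≤ 1 := by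
  have hs : ‖((x ^ 2 : ℝ) : ℂ)‖ < 1 := by push_cast; exact nlt h1 2 (by norm_num)
  have hm : ‖((-x : ℝ) : ℂ)‖ < 1 := by push_cast; rwa [norm_neg]
  obtain ⟨a, ha⟩ := gP_real h1
  obtain ⟨b, hb⟩ := gP_real hs
  obtain ⟨c, hc⟩ := gP_real hm
  have e := one_sub_zf h1
  have hz : zf x = ((-64 * x * b ^ 24 / a ^ 24 : ℝ) : ℂ) := by
    rw [zf, ha]; push_cast at hb ⊢; rw [hb]
  have he : eF x ^ 2 / (tB x ^ 2) ^ 2 = (((2 * ((c ^ 2 / b) ^ 2) ^ 2 - ((a ^ 2 / b) ^ 2) ^ 2) ^ 2 / (((a ^ 2 / b) ^ 2) ^ 2) ^ 2 : ℝ) : ℂ) := by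
    rw [eF, tA, tB, pP, pP, ha]; push_cast at hb hc ⊢
    rw [hc, neg_sq, hb]
  rw [he, hz] at e
  have e' := congrArg Complex.re e
  rw [← ofReal_one, ← ofReal_sub, ofReal_re, ofReal_re] at e'
  rw [hz, norm_real, Real.norm_eq_abs, abs_le]
  have p1 : 0 ≤ -64 * x * b ^ 24 / a ^ 24 := by
    have : 0 ≤ -64 * x := by linarith
    have : 0 ≤ b ^ 24 := Even.pow_nonneg (by decide) b
    have : 0 ≤ a ^ 24 := Even.pow_nonneg (by decide) a
    positivity
  have p2 : 0 ≤ (2 * ((c ^ 2 / b) ^ 2) ^ 2 - ((a ^ 2 / b) ^ 2) ^ 2) ^ 2 / (((a ^ 2 / b) ^ 2) ^ 2) ^ 2 := by positivity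
  constructor <;> linarith

lemma zf_side {τ : ℂ} (h : 0 < τ.im) (hre : τ.re = 1/2 ∨ τ.re = -1/2) : ‖zf (qt τ)‖ ≤ 1 := by
  have key : qt τ = ((-Real.exp (-2 * π * τ.im) : ℝ) : ℂ) := by
    rcases hre with hre | hre
    · have : (2 * π * I * τ) = ((-2 * π * τ.im : ℝ) : ℂ) + π * I := by
        conv_lhs => rw [← re_add_im τ, hre]
        push_cast
        linear_combination (2 * π * τ.im) * I_sq
      rw [qt, this, Complex.exp_add, Complex.exp_pi_mul_I]; push_cast; ring
    · have : (2 * π * I * τ) = ((-2 * π * τ.im : ℝ) : ℂ) - π * I := by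
        conv_lhs => rw [← re_add_im τ, hre]
        push_cast
        linear_combination (2 * π * τ.im) * I_sq
      rw [qt, this, Complex.exp_sub, Complex.exp_pi_mul_I]; push_cast; ring
  have hn := qt_norm h
  rw [key] at hn ⊢
  exact zf_real hn (by have := Real.exp_pos (-2 * π * τ.im); linarith)

def UU : Set ℂ := {τ | |τ.re| < 1/2 ∧ 1/2 < normSq τ ∧ 0 < τ.im}

lemma qt_normEq (τ : ℂ) : ‖qt τ‖ = Real.exp (-2 * π * τ.im) := by
  rw [qt, Complex.norm_exp]; simp

lemma qt_ana (τ : ℂ) : AnalyticAt ℂ qt τ := by unfold qt; fun_prop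

lemma big {ε : ℝ} (hε : 0 < ε) : ∃ Y0 : ℝ, ∀ τ : ℂ, Y0 ≤ τ.im → ‖qt τ‖ < ε := by
  have h1 : Filter.Tendsto (fun y : ℝ => Real.exp (-2 * π * y)) Filter.atTop (nhds 0) := by
    refine Real.tendsto_exp_atBot.comp ?_
    exact Filter.tendsto_id.const_mul_atTop_of_neg (by have := Real.pi_pos; linarith)
  obtain ⟨Y, hY⟩ := Filter.eventually_atTop.mp (h1.eventually_lt_const hε)
  exact ⟨Y, fun τ h => by rw [qt_normEq]; exact hY _ h⟩

lemma zf_le {τ : ℂ} (h : τ ∈ UU) : ‖zf (qt τ)‖ ≤ 1 := by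
  obtain ⟨ε, hε, hh⟩ := Metric.eventually_nhds_iff_ball.mp ev_zf
  obtain ⟨Y0, hY0⟩ := big hε
  set Y := max Y0 (τ.im + 1)
  set R : Set ℂ := {τ | |τ.re| < 1/2 ∧ 1/2 < normSq τ ∧ 0 < τ.im ∧ τ.im < Y} with hR
  set K : Set ℂ := {τ | |τ.re| ≤ 1/2 ∧ 1/2 ≤ normSq τ ∧ 0 ≤ τ.im ∧ τ.im ≤ Y} with hK
  have hcre : Continuous fun τ : ℂ => |τ.re| := continuous_re.abs
  have hRo : IsOpen R := by
    refine (isOpen_lt hcre continuous_const).inter ((isOpen_lt continuous_const continuous_normSq).inter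
      ((isOpen_lt continuous_const continuous_im).inter (isOpen_lt continuous_im continuous_const)))
  have hKc : IsClosed K := by
    refine (isClosed_le hcre continuous_const).inter ((isClosed_le continuous_const continuous_normSq).inter
      ((isClosed_le continuous_const continuous_im).inter (isClosed_le continuous_im continuous_const)))
  have hRK : closure R ⊆ K := closure_minimal (fun x hx => ⟨hx.1.le, hx.2.1.le, hx.2.2.1.le, hx.2.2.2.le⟩) hKc
  have him : ∀ x ∈ K, 0 < x.im := by
    rintro x ⟨h1, h2, h3, h4⟩
    refine lt_of_le_of_ne h3 fun h0 => ?_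
    rw [normSq_apply, ← h0] at h2
    have := abs_le.mp h1
    nlinarith
  have hbd : Bornology.IsBounded R := by
    refine (Metric.isBounded_iff_subset_closedBall 0).mpr ⟨1/2 + Y, fun x hx => ?_⟩
    rw [mem_closedBall_zero_iff]
    refine (norm_le_abs_re_add_abs_im x).trans ?_
    rw [abs_of_pos hx.2.2.1]
    exact add_le_add hx.1.le hx.2.2.2.le
  have hd : DiffContOnCl ℂ (fun τ => zf (qt τ)) R := by
    refine DifferentiableOn.diffContOnCl fun x hx => ?_
    have := him x (hRK hx)
    exact (DifferentiableAt.comp x (zf_ana (qt_norm this)).differentiableAt (qt_ana x).differentiableAt).differentiableWithinAt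
  refine Complex.norm_le_of_forall_mem_frontier_norm_le hbd hd ?_ (subset_closure (show τ ∈ R from ⟨h.1, h.2.1, h.2.2, lt_of_lt_of_le (by linarith) (le_max_right _ _)⟩))
  intro x hx
  rw [frontier, hRo.interior_eq] at hx
  have hxK := hRK hx.1
  have hxi := him x hxK
  by_cases c1 : Y ≤ x.im
  · have := (hh (qt x) (by rw [mem_ball_zero_iff]; exact hY0 x (le_trans (le_max_left _ _) c1)))
    exact this.le
  by_cases c2 : |x.re| < 1/2
  · by_cases c3 : 1/2 < normSq x
    · exact absurd ⟨c2, c3, hxi, not_le.mp c1⟩ hx.2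
    · exact (zf_circle hxi (le_antisymm (not_lt.mp c3) hxK.2.1)).le
  · have : |x.re| = 1/2 := le_antisymm hxK.1 (not_lt.mp c2)
    refine zf_side hxi ?_
    rcases abs_eq (by norm_num : (0:ℝ) ≤ 1/2) |>.mp this with h | h
    · exact Or.inl h
    · exact Or.inr (by rw [h]; norm_num)

lemma UU_open : IsOpen UU := (isOpen_lt continuous_re.abs continuous_const).inter
  ((isOpen_lt continuous_const continuous_normSq).inter (isOpen_lt continuous_const continuous_im))

lemma UU_pre : IsPreconnected UU := by
  have h1 : IsPreconnected ((Set.Ioo (-1/2 : ℝ) (1/2)) ×ˢ (Set.Ioi (0:ℝ))) := isPreconnected_Ioo.prod isPreconnected_Ioi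
  have h2 := h1.image (fun p : ℝ × ℝ => (p.1 : ℂ) + (Real.sqrt (1/2 - p.1 ^ 2) + p.2 : ℝ) * I) (by fun_prop)
  convert h2 using 1
  ext τ
  simp only [UU, Set.mem_ofPred_eq, Set.mem_image, Set.mem_prod, Set.mem_Ioo, Set.mem_Ioi, Prod.exists]
  constructor
  · rintro ⟨a, b, c⟩
    rw [abs_lt] at a
    refine ⟨τ.re, τ.im - Real.sqrt (1/2 - τ.re ^ 2), ⟨⟨by linarith, a.2⟩, ?_⟩, ?_⟩
    · rw [sub_pos, Real.sqrt_lt' c]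
      rw [normSq_apply] at b; nlinarith
    · simp [re_add_im]
  · rintro ⟨x, s, ⟨⟨a, b⟩, c⟩, rfl⟩
    have h0 : 0 ≤ 1/2 - x ^ 2 := by nlinarith
    have hs := Real.sq_sqrt h0
    have hs0 := Real.sqrt_nonneg (1/2 - x ^ 2)
    have hs1 : 0 < Real.sqrt (1/2 - x ^ 2) := Real.sqrt_pos.mpr (by nlinarith)
    refine ⟨?_, ?_, ?_⟩
    · simp only [add_re, ofReal_re, re_ofReal_mul, I_re, mul_zero, add_zero]
      rw [abs_lt]; constructor <;> linarith
    · rw [normSq_add_mul_I]; nlinarith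
    · simp only [add_im, ofReal_im, im_ofReal_mul, I_im, mul_one, zero_add]
      linarith

lemma UU_big (Y0 : ℝ) : ∃ τ ∈ UU, Y0 ≤ τ.im := by
  obtain ⟨y, h1, h2⟩ : ∃ y : ℝ, 1 ≤ y ∧ Y0 ≤ y := ⟨max Y0 1, le_max_right _ _, le_max_left _ _⟩
  refine ⟨(y : ℂ) * I, ⟨?_, ?_, ?_⟩, ?_⟩
  · simp
  · simp [normSq_apply]; nlinarith
  · simp; linarith
  · simpa using h2

lemma zf_lt {τ : ℂ} (h : τ ∈ UU) : ‖zf (qt τ)‖ < 1 := by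
  refine lt_of_le_of_ne (zf_le h) fun he => ?_
  have hd : DifferentiableOn ℂ (fun τ => zf (qt τ)) UU := fun x hx => 
    (DifferentiableAt.comp x (zf_ana (qt_norm hx.2.2)).differentiableAt (qt_ana x).differentiableAt).differentiableWithinAt
  have hm : IsMaxOn (norm ∘ fun τ => zf (qt τ)) UU τ := by
    intro x hx
    simp only [Set.mem_ofPred_eq, Function.comp]
    rw [he]; exact zf_le hx
  have := Complex.eqOn_of_isPreconnected_of_isMaxOn_norm UU_pre UU_open hd h hm
  obtain ⟨ε, hε, hh⟩ := Metric.eventually_nhds_iff_ball.mp ev_zf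
  obtain ⟨Y0, hY0⟩ := big hε
  obtain ⟨σ, hσ, hσ2⟩ := UU_big Y0
  have h1 := hh (qt σ) (by rw [mem_ball_zero_iff]; exact hY0 σ hσ2)
  have h2 := this hσ
  simp only [Function.const] at h2
  rw [h2, he] at h1
  exact lt_irrefl _ h1

lemma Aser_U {τ : ℂ} (h : τ ∈ UU) : Aser (zf (qt τ)) = sS (qt τ) := by
  obtain ⟨ε, hε, hh⟩ := Metric.eventually_nhds_iff_ball.mp concl1
  obtain ⟨Y0, hY0⟩ := big hε
  obtain ⟨σ, hσ, hσ2⟩ := UU_big Y0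
  have h1 : AnalyticOnNhd ℂ (fun τ => Aser (zf (qt τ))) UU := fun x hx =>
    AnalyticAt.fun_comp (g := fun q => Aser (zf q)) (AnalyticAt.fun_comp (Aser_ana (zf_lt hx)) (zf_ana (qt_norm hx.2.2))) (qt_ana x)
  have h2 : AnalyticOnNhd ℂ (fun τ => sS (qt τ)) UU := fun x hx =>
    AnalyticAt.fun_comp (sS_ana (qt_norm hx.2.2)) (qt_ana x)
  refine h1.eqOn_of_preconnected_of_eventuallyEq h2 UU_pre hσ ?_ h
  have : ∀ᶠ x in nhds σ, ‖qt x‖ < ε := (qt_ana σ).continuousAt.norm.eventually_lt_const (hY0 σ hσ2)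
  filter_upwards [this] with x hx
  exact hh _ (by rwa [mem_ball_zero_iff])


lemma eta_gP (τ : ℂ) : dedekindEta τ = cexp (π * I * τ / 12) * gP (qt τ) := by
  rw [dedekindEta, gP]
  congr 1
  refine tprod_congr fun n => ?_
  rw [qt, ← Complex.exp_nat_mul]
  congr 2
  push_cast; ring

lemma w_UU {t : ℝ} (h1 : -1/2 < t) (h2 : t < 1/2) : -1 / (2 * ((t:ℂ) + I / 2)) ∈ UU := by
  have hi : 0 < ((t:ℂ) + I / 2).im := by simp
  have hns : normSq ((t:ℂ) + I / 2) = t ^ 2 + 1/4 := by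
    rw [normSq_apply]; simp; ring
  have hp : 0 < t ^ 2 + 1/4 := by positivity
  refine ⟨?_, ?_, w_im hi⟩
  · have : (-1 / (2 * ((t:ℂ) + I / 2))).re = - t / (2 * (t ^ 2 + 1/4)) := by
      have : -1 / (2 * ((t:ℂ) + I / 2)) = ((-1/2 : ℝ) : ℂ) * ((t:ℂ) + I / 2)⁻¹ := by
        push_cast; field_simp
      rw [this, re_ofReal_mul, inv_re, hns]
      simp; field_simp
    rw [this, abs_lt]
    constructor
    · rw [lt_div_iff₀ (by positivity)]; nlinarith [mul_pos (sub_pos.mpr h2) (sub_pos.mpr h2)]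
    · rw [div_lt_iff₀ (by positivity)]; nlinarith [mul_pos (sub_pos.mpr h1) (sub_pos.mpr h1)]
  · rw [map_div₀, map_mul, hns]
    have : normSq (-1) = 1 := by simp [normSq_apply]
    have h4 : normSq 2 = 4 := by simp [normSq_apply]; norm_num
    rw [this, h4, lt_div_iff₀ (by positivity)]
    nlinarith

lemma integrand {τ : ℂ} (h : 0 < τ.im) :
    sS (qt τ) * eF (qt τ) * sS (qt (-1 / (2 * τ))) =
      -16 * (τ ^ 2 * (dedekindEta τ ^ 12 + 32 * dedekindEta τ ^ 4 * dedekindEta (4 * τ) ^ 8)) := by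
  have hq := qt_norm h
  have e1 := eF_eq hq
  have g1 := gP_ne hq
  have g2 := gP_ne (nlt hq 2 (by norm_num))
  have hq4 : qt (4 * τ) = qt τ ^ 4 := by
    rw [qt, qt, ← Complex.exp_nat_mul]; congr 1; push_cast; ring
  have x1 : cexp (π * I * τ / 12) ^ 12 = cexp (π * I * τ) := by
    rw [← Complex.exp_nat_mul]; congr 1; push_cast; ring
  have x2 : cexp (π * I * τ / 12) ^ 4 * cexp (π * I * (4 * τ) / 12) ^ 8 = cexp (π * I * τ) * qt τ := by
    rw [qt, ← Complex.exp_nat_mul, ← Complex.exp_nat_mul, ← Complex.exp_add, ← Complex.exp_add]; congr 1; push_cast; ring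
  rw [eta_gP, eta_gP, hq4]
  rw [show sS (qt (-1 / (2 * τ))) = _ from Fe h, sS, tB, pP]
  have y : ((gP (qt τ) ^ 2 / gP (qt τ ^ 2)) ^ 2) ^ 2 * eF (qt τ) *
      (-16 * τ ^ 2 * cexp (π * I * τ) * gP (qt τ ^ 2) ^ 8 / gP (qt τ) ^ 4) =
      -16 * τ ^ 2 * cexp (π * I * τ) * gP (qt τ) ^ 4 * (gP (qt τ ^ 2) ^ 4 * eF (qt τ)) := by
    field_simp
  rw [y, e1]
  linear_combination (16 * τ ^ 2 * gP (qt τ) ^ 12) * x1 + (16 * 32 * τ ^ 2 * gP (qt τ) ^ 4 * gP (qt τ ^ 4) ^ 8) * x2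

lemma main_sum : HasSum (fun k => bk k * bk k)
    (∫ t in (-1/2 : ℝ)..(1/2 : ℝ), sS (qt ((t:ℂ) + I / 2)) * eF (qt ((t:ℂ) + I / 2)) * sS (qt (-1 / (2 * ((t:ℂ) + I / 2))))) := by
  have hi : ∀ t : ℝ, 0 < ((t:ℂ) + I / 2).im := fun t => by simp
  have hqc : Continuous fun t : ℝ => qt ((t:ℂ) + I / 2) := by unfold qt; fun_prop
  have hq : ∀ t : ℝ, ‖qt ((t:ℂ) + I / 2)‖ < 1 := fun t => qt_norm (hi t)
  have hq0 : ∀ t : ℝ, qt ((t:ℂ) + I / 2) ≠ 0 := fun t => Complex.exp_ne_zero _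
  have hfc : ∀ k, Continuous fun t : ℝ => fK k (qt ((t:ℂ) + I / 2)) := fun k =>
    continuous_iff_continuousAt.mpr fun t =>
      ContinuousAt.comp (f := fun t : ℝ => qt ((t:ℂ) + I / 2)) (fK_diff k (hq t) (hq0 t)).continuousAt hqc.continuousAt
  obtain ⟨C, hC⟩ := (isCompact_Icc (a := (-1/2:ℝ)) (b := 1/2)).exists_bound_of_continuousOn (hfc 0).continuousOn
  have hfun : (fun k => bk k * bk k) = fun k => ∫ t in (-1/2 : ℝ)..(1/2 : ℝ), bk k * fK k (qt ((t:ℂ) + I / 2)) := by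
    funext k
    rw [intervalIntegral.integral_const_mul, coeff]
  rw [hfun]
  have hae : ∀ᵐ t : ℝ, t ≠ 1/2 := by
    simp [MeasureTheory.ae_iff]
  have hfk : ∀ (k : ℕ) (t : ℝ), fK k (qt ((t:ℂ) + I / 2)) =
      fK 0 (qt ((t:ℂ) + I / 2)) * zf (qt (-1 / (2 * ((t:ℂ) + I / 2)))) ^ k := by
    intro k t
    have h1 := zf_zf (hi t)
    have h2 := zf_ne (hq t) (hq0 t)
    have h3 : zf (qt (-1 / (2 * ((t:ℂ) + I / 2)))) = (zf (qt ((t:ℂ) + I / 2)))⁻¹ := eq_inv_of_mul_eq_one_right h1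
    rw [h3, fK, fK, inv_pow, pow_zero, div_one, div_eq_mul_inv]
  refine intervalIntegral.hasSum_integral_of_dominated_convergence (fun k _ => ‖bk k‖ * C) ?_ ?_ ?_ ?_ ?_
  · intro k; exact (continuous_const.mul (hfc k)).aestronglyMeasurable
  · intro k
    filter_upwards [hae] with t ht hm
    rw [Set.uIoc_of_le (by norm_num)] at hm
    have hU := w_UU hm.1 (lt_of_le_of_ne hm.2 ht)
    rw [norm_mul, hfk, norm_mul, norm_pow]
    have a1 := hC t ⟨hm.1.le, hm.2⟩
    have a2 := pow_le_one₀ (n := k) (norm_nonneg _) (zf_le hU)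
    refine mul_le_mul_of_nonneg_left ?_ (norm_nonneg _)
    calc _ ≤ ‖fK 0 (qt ((t:ℂ) + I / 2))‖ * 1 := mul_le_mul_of_nonneg_left a2 (norm_nonneg _)
      _ ≤ C := by rw [mul_one]; exact a1
  · exact Filter.Eventually.of_forall fun t _ => bk_summ.mul_right C
  · simp
  · filter_upwards [hae] with t ht hm
    rw [Set.uIoc_of_le (by norm_num)] at hm
    have hU := w_UU hm.1 (lt_of_le_of_ne hm.2 ht)
    rw [← Aser_U hU]
    have := ((ser_summ bk_le (zf_lt hU)).hasSum).mul_left (sS (qt ((t:ℂ) + I / 2)) * eF (qt ((t:ℂ) + I / 2)))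
    rw [Aser]
    have e : (fun k => bk k * fK k (qt ((t:ℂ) + I / 2))) = fun i => sS (qt ((t:ℂ) + I / 2)) * eF (qt ((t:ℂ) + I / 2)) *
        (bk i * zf (qt (-1 / (2 * ((t:ℂ) + I / 2)))) ^ i) := by
      funext k
      rw [hfk, fK]; ring
    rw [e]
    exact this

/-- `₆F₅(1/2,…,1/2; 1,…,1; 1) = ∑ₖ ((1/2)ₖ/k!)⁶` equals `16` times the integral of
`τ²·(η(τ)¹² + 32η(τ)⁴η(4τ)⁸) dτ` along the straight segment from `(1+i)/2` to
`(−1+i)/2` (parametrized as `τ = t + i/2`, `t` from `1/2` down to `−1/2`, giving the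
minus sign below).  The eta-product is `f_{8.6.a.a}(τ/2)`. -/
theorem statement12 :
    (∑' k : ℕ, (poch (1/2) k / (Nat.factorial k : ℂ)) ^ 6)
      = -16 * ∫ t in (-1/2 : ℝ)..(1/2 : ℝ),
          ((t : ℂ) + Complex.I / 2) ^ 2
            * (dedekindEta ((t : ℂ) + Complex.I / 2) ^ 12
                + 32 * dedekindEta ((t : ℂ) + Complex.I / 2) ^ 4
                    * dedekindEta (4 * (t : ℂ) + 2 * Complex.I) ^ 8) := by
  have h := main_sum.tsum_eq
  have e : (∑' k : ℕ, (poch (1/2) k / (Nat.factorial k : ℂ)) ^ 6) = ∑' k, bk k * bk k :=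
    tsum_congr fun k => by rw [bk, ck]; ring
  rw [e, h, ← intervalIntegral.integral_const_mul]
  refine intervalIntegral.integral_congr fun t _ => ?_
  have := integrand (τ := (t:ℂ) + I / 2) (by simp)
  rw [this, show 4 * ((t:ℂ) + I / 2) = 4 * (t:ℂ) + 2 * I by ring]
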